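/- arXiv:2012.08766 — 5 statements merged into one kernel-verified Lean document; each statement's English description precedes it below -/
import Mathlib

section
/- Let 1<p<∞, μ>0 and let w ∈ P(ℝ₊) be admissible, i.e. there exist η₀>0 and K>0 with ∫_t^{η₀} w(s)^{-1} ds ≤ e^{K/√t} for all 0<t<η₀. Then for every sufficiently small η>0 there exist positive numbers C₀, C₁, L (depending only on w, p, η, μ, not on u) such that for every u ∈ C_c^1((0,η]): ∫_0^η ( |u'(t)|^p − (|u(t)|^p / F_η(t)^p)( Λ_p + C₀ / G_η(t)^2 ) ) W_p(t) dt ≥ C₁ ∫_0^η ( |u'(t)|^p + (|u(t)|^p / F_η(t)^p)( Λ_p + C₀ / G_η(t)^2 ) ) W_p(t) · t dt − L |u(η)|^p. -/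
/-!
If `φ ≥ 0` satisfies the Riccati inequality `φ' ≥ (p - 1) φ ^ p' A ^ (1 - p') + V`, then Young's
inequality gives `A |u'| ^ p - V |u| ^ p ≥ -(φ |u| ^ p)'`, and integrating yields a Hardy inequality
with boundary term `-φ(η) |u(η)| ^ p`. The remainder on the right-hand side is absorbed by taking
`A = (1 - C₁ t) W_p` and `V = (1 + C₁ t) (Λ_p + C₀ / G ^ 2) W_p / F ^ p`, with
`φ = (1 / p') ^ (p - 1) f ^ (1 - p) (1 + ε / G)`. Since `G' = -1 / F`, the factor `1 + ε / G` gains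
a term of order `ε / G ^ 2` in the Riccati inequality, whereas `C₀ = Λ_p ε ^ 2` and convexity cost
only `ε ^ 2 / G ^ 2`. As `G = μ + log (f / μ)`, admissibility makes `t G(t) ^ 2` bounded, so that
the losses `C₁ t` are also of order `ε ^ 2 / G ^ 2` for a small constant `C₁`.
-/

open MeasureTheory Set

/-- `f_η(t) = μ + ∫_t^η w(s)⁻¹ ds`  (case `w ∈ P(ℝ₊)`). -/
noncomputable def fP (w : ℝ → ℝ) (μ η t : ℝ) : ℝ := μ + ∫ s in t..η, (w s)⁻¹

/-- `F_η(t) = w(t) f_η(t)`. -/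
noncomputable def FP (w : ℝ → ℝ) (μ η t : ℝ) : ℝ := w t * fP w μ η t

/-- `G_η(t) = μ + ∫_t^η F_η(s)⁻¹ ds`. -/
noncomputable def GP (w : ℝ → ℝ) (μ η t : ℝ) : ℝ := μ + ∫ s in t..η, (FP w μ η s)⁻¹

/-- `W_p(t) = w(t)^(p-1)`. -/
noncomputable def Wp (w : ℝ → ℝ) (p t : ℝ) : ℝ := w t ^ (p - 1)

section ScalarInequalities

variable {p q : ℝ}

lemma weighted_young_inequality {v b y z : ℝ} (hpq : p.HolderConjugate q) (hv : 0 < v)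
    (hb : 0 ≤ b) (hy : 0 ≤ y) (hz : 0 ≤ z) :
    p * (b * z ^ (p - 1) * y) ≤ v * y ^ p + (p - 1) * b ^ q * v ^ (1 - q) * z ^ p := by
  have hp := hpq.pos
  have hprod : v ^ p⁻¹ * y * (v ^ (-p⁻¹) * (b * z ^ (p - 1))) = b * z ^ (p - 1) * y := by
    have : v ^ p⁻¹ * v ^ (-p⁻¹) = 1 := by rw [← Real.rpow_add hv, add_neg_cancel, Real.rpow_zero]
    linear_combination (b * z ^ (p - 1) * y) * this
  have hfst : (v ^ p⁻¹ * y) ^ p = v * y ^ p := by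
    rw [Real.mul_rpow (by positivity) hy, Real.rpow_inv_rpow hv.le hp.ne']
  have hsnd : (v ^ (-p⁻¹) * (b * z ^ (p - 1))) ^ q = v ^ (1 - q) * (b ^ q * z ^ p) := by
    have hexp : -p⁻¹ * q = 1 - q := by
      have := hpq.mul_eq_add
      field_simp
      linarith
    rw [Real.mul_rpow (by positivity) (by positivity), Real.mul_rpow hb (by positivity),
      ← Real.rpow_mul hv.le, ← Real.rpow_mul hz, hexp, hpq.sub_one_mul_conj]
  have hyoung := Real.young_inequality_of_nonneg (a := v ^ p⁻¹ * y)
    (b := v ^ (-p⁻¹) * (b * z ^ (p - 1))) (by positivity) (by positivity) hpq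
  rw [hprod, hfst, hsnd] at hyoung
  calc p * (b * z ^ (p - 1) * y)
      ≤ p * (v * y ^ p / p + v ^ (1 - q) * (b ^ q * z ^ p) / q) := by gcongr
    _ = v * y ^ p + p / q * (v ^ (1 - q) * (b ^ q * z ^ p)) := by field_simp
    _ = v * y ^ p + (p - 1) * b ^ q * v ^ (1 - q) * z ^ p := by
        rw [hpq.div_conj_eq_sub_one]; ring

lemma one_sub_rpow_neg_le_exp {r τ : ℝ} (hr : 0 ≤ r) (hτ : 0 ≤ τ) (hτ' : τ ≤ 1 / 2) :
    (1 - τ) ^ (-r) ≤ Real.exp (2 * (r * τ)) := by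
  have hpos : 0 < 1 - τ := by linarith
  have hinv : (1 - τ)⁻¹ ≤ Real.exp (2 * τ) := by
    refine le_trans ?_ (Real.add_one_le_exp _)
    rw [inv_le_iff_one_le_mul₀ hpos]
    nlinarith
  calc (1 - τ) ^ (-r) = ((1 - τ)⁻¹) ^ r := by rw [Real.rpow_neg hpos.le, Real.inv_rpow hpos.le]
    _ ≤ Real.exp (2 * τ) ^ r := by gcongr
    _ = Real.exp (2 * (r * τ)) := by rw [← Real.exp_mul]; ring_nf

lemma one_add_rpow_mul_one_sub_rpow_le {y τ : ℝ} (hpq : p.HolderConjugate q) (hy : 0 ≤ y)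
    (hqy : 2 * q * y ≤ 1) (hτ : 0 ≤ τ) (hqτ : q * τ ≤ y ^ 2) :
    (1 + y) ^ q * (1 - τ) ^ (1 - q) ≤ 1 + (q * y + 2 * ((q - 1) * τ)) + (2 * q * y) ^ 2 := by
  have hq : 1 < q := hpq.symm.lt
  have hτ2 : τ ≤ 1 / 2 := by nlinarith
  obtain ⟨x, hx⟩ : ∃ x, x = q * y + 2 * ((q - 1) * τ) := ⟨_, rfl⟩
  have hx0 : 0 ≤ x := by
    have := sub_pos.2 hq
    rw [hx]; positivity
  have hxy : x ≤ 2 * q * y := by nlinarith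
  have hfst : (1 + y) ^ q ≤ Real.exp (q * y) := by
    rw [mul_comm q, Real.exp_mul]
    gcongr
    linarith [Real.add_one_le_exp y]
  have hsnd : (1 - τ) ^ (1 - q) ≤ Real.exp (2 * ((q - 1) * τ)) := by
    rw [← neg_sub q 1]
    exact one_sub_rpow_neg_le_exp (by linarith) hτ hτ2
  have hexp : Real.exp x ≤ 1 + x + x ^ 2 := by
    have hx1 : |x| ≤ 1 := by rw [abs_of_nonneg hx0]; exact hxy.trans hqy
    linarith [le_of_abs_le (Real.abs_exp_sub_one_sub_id_le hx1)]
  calc (1 + y) ^ q * (1 - τ) ^ (1 - q) ≤ Real.exp (q * y) * Real.exp (2 * ((q - 1) * τ)) := by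
        have : 0 ≤ (1 - τ) ^ (1 - q) := Real.rpow_nonneg (by linarith) _
        gcongr
    _ = Real.exp x := by rw [hx, Real.exp_add]
    _ ≤ 1 + x + x ^ 2 := hexp
    _ ≤ 1 + x + (2 * q * y) ^ 2 := by gcongr
    _ = _ := by rw [hx]

-- The terms of order `0` and `1` in `y` agree on both sides because `(p - 1) * q = p`.
lemma perturbed_hardy_constant_le {y τ : ℝ} (hpq : p.HolderConjugate q) (hy : 0 ≤ y)
    (hqy : 2 * q * y ≤ 1) (hτ : 0 ≤ τ) (hqτ : q * τ ≤ y ^ 2) :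
    (p - 1) * ((1 + y) ^ q * (1 - τ) ^ (1 - q)) + (1 + y ^ 2) * (1 + τ)
      ≤ p * (1 + y) + 9 * p * q * y ^ 2 := by
  have hp : 1 < p := hpq.lt
  have hq : 1 < q := hpq.symm.lt
  have hpq1 : (p - 1) * q = p := hpq.sub_one_mul_conj
  have hτy : τ ≤ y ^ 2 := (le_mul_of_one_le_left hτ hq.le).trans hqτ
  have hτ1 : τ ≤ 1 := by nlinarith
  have hpow := mul_le_mul_of_nonneg_left
    (one_add_rpow_mul_one_sub_rpow_le hpq hy hqy hτ hqτ) (sub_pos.2 hp).le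
  have hexpand : (p - 1) * (1 + (q * y + 2 * ((q - 1) * τ)) + (2 * q * y) ^ 2)
      = p - 1 + p * y + 2 * τ + 4 * p * q * y ^ 2 := by
    linear_combination (y + 2 * τ + 4 * q * y ^ 2) * hpq1
  have hyτ : y ^ 2 * τ ≤ y ^ 2 := mul_le_of_le_one_right (by positivity) hτ1
  have hpq5 : 5 * y ^ 2 ≤ 5 * (p * q) * y ^ 2 := by
    gcongr
    nlinarith
  linarith

end ScalarInequalities

section Riccati

variable {p q η : ℝ} {u u' : ℝ → ℝ}

/-- `u` belongs to `C_c^1((0, η])`, with derivative `u'`. Only the values on `(0, η]` matter. -/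
structure IsHardyTestFunction (η : ℝ) (u u' : ℝ → ℝ) : Prop where
  hasDerivWithinAt : ∀ t ∈ Ioc 0 η, HasDerivWithinAt u (u' t) (Ioc 0 η) t
  continuousOn_deriv : ContinuousOn u' (Ioc 0 η)
  exists_eq_zero : ∃ a, 0 < a ∧ ∀ t ∈ Ioc 0 a, u t = 0

lemma intervalIntegrable_of_eq_zero_near_zero {h : ℝ → ℝ} {a : ℝ} (ha : 0 < a) (haη : a ≤ η)
    (hc : ContinuousOn h (Ioc 0 η)) (hz : ∀ t ∈ Ioc 0 a, h t = 0) :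
    IntervalIntegrable h volume 0 η := by
  rw [intervalIntegrable_iff_integrableOn_Ioc_of_le (ha.le.trans haη)]
  have hIcc : IntegrableOn h (Icc a η) :=
    (hc.mono (Icc_subset_Ioc_iff haη |>.2 ⟨ha, le_rfl⟩)).integrableOn_Icc
  refine hIcc.of_forall_sdiff_eq_zero measurableSet_Ioc fun t ht => hz t ⟨ht.1.1, ?_⟩
  by_contra! hat
  exact ht.2 ⟨hat.le, ht.1.2⟩

lemma integral_eq_integral_of_eq_zero_near_zero {h : ℝ → ℝ} {a : ℝ} (ha : 0 < a) (haη : a ≤ η)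
    (hz : ∀ t ∈ Ioc 0 a, h t = 0) : ∫ t in (0 : ℝ)..η, h t = ∫ t in a..η, h t := by
  rw [intervalIntegral.integral_of_le (ha.le.trans haη), intervalIntegral.integral_of_le haη]
  refine setIntegral_eq_of_subset_of_forall_sdiff_eq_zero measurableSet_Ioc
    (Ioc_subset_Ioc_left ha.le) fun t ht => hz t ⟨ht.1.1, ?_⟩
  by_contra! hat
  exact ht.2 ⟨hat, ht.1.2⟩

namespace IsHardyTestFunction

lemma continuousOn (hu : IsHardyTestFunction η u u') : ContinuousOn u (Ioc 0 η) := fun t ht =>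
  (hu.hasDerivWithinAt t ht).continuousWithinAt

lemma exists_eq_zero_deriv_eq_zero (hu : IsHardyTestFunction η u u') (hη : 0 < η) :
    ∃ a, 0 < a ∧ a ≤ η ∧ ∀ t ∈ Ioc 0 a, u t = 0 ∧ u' t = 0 := by
  obtain ⟨a₀, ha₀, hzero⟩ := hu.exists_eq_zero
  refine ⟨min a₀ η, lt_min ha₀ hη, min_le_right _ _, fun t ht => ?_⟩
  have hta : t ≤ a₀ := ht.2.trans (min_le_left _ _)
  have htη : t ≤ η := ht.2.trans (min_le_right _ _)
  have hz : ∀ s ∈ Ioc 0 t, u s = 0 := fun s hs => hzero s ⟨hs.1, hs.2.trans hta⟩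
  have htt : t ∈ Ioc 0 t := ⟨ht.1, le_rfl⟩
  have hderiv := (hu.hasDerivWithinAt t ⟨ht.1, htη⟩).mono (Ioc_subset_Ioc_right htη)
  have hderiv0 : HasDerivWithinAt u 0 (Ioc 0 t) t :=
    (hasDerivWithinAt_const t _ (0 : ℝ)).congr hz (hz t htt)
  exact ⟨hz t htt, (uniqueDiffOn_Ioc 0 t t htt).eq_deriv _ hderiv hderiv0⟩

lemma continuousOn_energy (hu : IsHardyTestFunction η u u') (hp : 0 ≤ p) {A V : ℝ → ℝ}
    (hA : ContinuousOn A (Ioc 0 η)) (hV : ContinuousOn V (Ioc 0 η)) :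
    ContinuousOn (fun t => A t * |u' t| ^ p - V t * |u t| ^ p) (Ioc 0 η) :=
  (hA.mul (hu.continuousOn_deriv.abs.rpow_const fun _ _ => Or.inr hp)).sub
    (hV.mul (hu.continuousOn.abs.rpow_const fun _ _ => Or.inr hp))

lemma intervalIntegrable_energy (hu : IsHardyTestFunction η u u') (hη : 0 < η) (hp : 0 < p)
    {A V : ℝ → ℝ} (hA : ContinuousOn A (Ioc 0 η)) (hV : ContinuousOn V (Ioc 0 η)) :
    IntervalIntegrable (fun t => A t * |u' t| ^ p - V t * |u t| ^ p) volume 0 η := by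
  obtain ⟨a, ha, haη, hzero⟩ := hu.exists_eq_zero_deriv_eq_zero hη
  refine intervalIntegrable_of_eq_zero_near_zero ha haη (hu.continuousOn_energy hp.le hA hV)
    fun t ht => ?_
  simp [hzero t ht, Real.zero_rpow hp.ne']

end IsHardyTestFunction

lemma neg_deriv_mul_abs_rpow_le {A V φ φ' x x' : ℝ} (hpq : p.HolderConjugate q) (hA : 0 < A)
    (hφ : 0 ≤ φ) (hric : (p - 1) * φ ^ q * A ^ (1 - q) + V ≤ φ') :
    -(φ' * |x| ^ p + φ * (p * |x| ^ (p - 2) * x * x')) ≤ A * |x'| ^ p - V * |x| ^ p := by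
  have habs : -(|x| ^ (p - 2) * x * x') ≤ |x| ^ (p - 1) * |x'| := by
    refine (neg_le_abs _).trans_eq ?_
    rw [abs_mul, abs_mul, abs_of_nonneg (Real.rpow_nonneg (abs_nonneg x) _)]
    rcases eq_or_ne x 0 with rfl | hx
    · simp [Real.zero_rpow hpq.sub_one_ne_zero]
    · rw [← Real.rpow_add_one (abs_ne_zero.2 hx)]
      ring_nf
  have hyoung := weighted_young_inequality hpq hA hφ (abs_nonneg x') (abs_nonneg x)
  have habs' := mul_le_mul_of_nonneg_left habs (mul_nonneg hpq.nonneg hφ)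
  have hric' := mul_le_mul_of_nonneg_right hric (Real.rpow_nonneg (abs_nonneg x) p)
  linarith

theorem neg_mul_abs_rpow_le_integral_of_riccati {A V φ φ' : ℝ → ℝ} (hpq : p.HolderConjugate q)
    (hη : 0 < η) (hA : ContinuousOn A (Ioc 0 η)) (hV : ContinuousOn V (Ioc 0 η))
    (hA_pos : ∀ t ∈ Ioc 0 η, 0 < A t) (hφ_nonneg : ∀ t ∈ Ioc 0 η, 0 ≤ φ t)
    (hφ : ∀ t ∈ Ioc 0 η, HasDerivWithinAt φ (φ' t) (Ioc 0 η) t)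
    (hric : ∀ t ∈ Ioc 0 η, (p - 1) * φ t ^ q * A t ^ (1 - q) + V t ≤ φ' t)
    (hu : IsHardyTestFunction η u u') :
    -(φ η * |u η| ^ p) ≤ ∫ t in (0 : ℝ)..η, (A t * |u' t| ^ p - V t * |u t| ^ p) := by
  obtain ⟨a, ha, haη, hzero⟩ := hu.exists_eq_zero_deriv_eq_zero hη
  have hsub : Icc a η ⊆ Ioc 0 η := fun t ht => ⟨ha.trans_le ht.1, ht.2⟩
  have hderiv : ∀ t ∈ Ioc 0 η, HasDerivWithinAt (fun t => -(φ t * |u t| ^ p))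
      (-(φ' t * |u t| ^ p + φ t * (p * |u t| ^ (p - 2) * u t * u' t))) (Ioc 0 η) t := fun t ht =>
    ((hφ t ht).mul ((hasDerivAt_abs_rpow (u t) hpq.lt).comp_hasDerivWithinAt t
      (hu.hasDerivWithinAt t ht))).neg
  have hftc := intervalIntegral.sub_le_integral_of_hasDeriv_right_of_le haη
    (fun t ht => (hderiv t (hsub ht)).continuousWithinAt.mono hsub)
    (fun t ht => (hderiv t (hsub (Ioo_subset_Icc_self ht))).hasDerivAt
      (Ioc_mem_nhds (ha.trans ht.1) ht.2) |>.hasDerivWithinAt)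
    ((hu.continuousOn_energy hpq.nonneg hA hV).mono hsub).integrableOn_Icc
    fun t ht =>
      have ht := hsub (Ioo_subset_Icc_self ht)
      neg_deriv_mul_abs_rpow_le hpq (hA_pos t ht) (hφ_nonneg t ht) (hric t ht)
  have hua : u a = 0 := (hzero a ⟨ha, le_rfl⟩).1
  rw [integral_eq_integral_of_eq_zero_near_zero ha haη fun t ht => by
    simp [hzero t ht, Real.zero_rpow hpq.ne_zero]]
  simpa [hua, Real.zero_rpow hpq.ne_zero] using hftc

theorem integral_remainder_sub_le_of_riccati {W V ρ φ φ' : ℝ → ℝ} (hpq : p.HolderConjugate q)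
    (hη : 0 < η) (hW : ContinuousOn W (Ioc 0 η)) (hV : ContinuousOn V (Ioc 0 η))
    (hρ : ContinuousOn ρ (Ioc 0 η)) (hW_pos : ∀ t ∈ Ioc 0 η, 0 < W t)
    (hρ_lt : ∀ t ∈ Ioc 0 η, ρ t < 1) (hφ_nonneg : ∀ t ∈ Ioc 0 η, 0 ≤ φ t)
    (hφ : ∀ t ∈ Ioc 0 η, HasDerivWithinAt φ (φ' t) (Ioc 0 η) t)
    (hric : ∀ t ∈ Ioc 0 η,
      (p - 1) * φ t ^ q * ((1 - ρ t) * W t) ^ (1 - q) + (1 + ρ t) * (V t * W t) ≤ φ' t)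
    (hu : IsHardyTestFunction η u u') :
    (∫ t in (0 : ℝ)..η, (|u' t| ^ p + |u t| ^ p * V t) * W t * ρ t) - φ η * |u η| ^ p
      ≤ ∫ t in (0 : ℝ)..η, (|u' t| ^ p - |u t| ^ p * V t) * W t := by
  have hVW := hV.mul hW
  have hriccati := neg_mul_abs_rpow_le_integral_of_riccati (A := fun t => (1 - ρ t) * W t)
    (V := fun t => (1 + ρ t) * (V t * W t)) hpq hη
    ((continuousOn_const.sub hρ).mul hW) ((continuousOn_const.add hρ).mul hVW)
    (fun t ht => mul_pos (sub_pos.2 (hρ_lt t ht)) (hW_pos t ht)) hφ_nonneg hφ hric hu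
  have henergy : IntervalIntegrable (fun t => (|u' t| ^ p - |u t| ^ p * V t) * W t) volume 0 η :=
    (hu.intervalIntegrable_energy hη hpq.pos hW hVW).congr fun t _ => by
      simp only [Pi.mul_apply]; ring
  have hremainder : IntervalIntegrable
      (fun t => (|u' t| ^ p + |u t| ^ p * V t) * W t * ρ t) volume 0 η :=
    (hu.intervalIntegrable_energy hη hpq.pos (hW.mul hρ) (hVW.mul hρ).neg).congr fun t _ => by
      simp only [Pi.mul_apply, Pi.neg_apply]; ring
  have hsplit : ∫ t in (0 : ℝ)..η,
        ((1 - ρ t) * W t * |u' t| ^ p - (1 + ρ t) * (V t * W t) * |u t| ^ p)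
      = (∫ t in (0 : ℝ)..η, (|u' t| ^ p - |u t| ^ p * V t) * W t)
        - ∫ t in (0 : ℝ)..η, (|u' t| ^ p + |u t| ^ p * V t) * W t * ρ t := by
    rw [← intervalIntegral.integral_sub henergy hremainder]
    exact intervalIntegral.integral_congr fun t _ => by ring
  linarith

end Riccati

section WeightFunctions

variable {w : ℝ → ℝ} {μ η t : ℝ}

/-- Admissibility of a weight `w`: the growth condition on `∫_t w⁻¹` as `t → 0⁺`. -/
def IsAdmissibleWeight (w : ℝ → ℝ) : Prop :=
  ∃ η₀ K : ℝ, 0 < η₀ ∧ 0 < K ∧ ∀ t, 0 < t → t < η₀ →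
    (∫ s in t..η₀, (w s)⁻¹) ≤ Real.exp (K / Real.sqrt t)

lemma intervalIntegrable_inv_weight (hw_pos : ∀ t, 0 < t → 0 < w t)
    (hw : ContinuousOn w (Ioi 0)) {a b : ℝ} (ha : 0 < a) (hb : 0 < b) :
    IntervalIntegrable (fun s => (w s)⁻¹) volume a b := by
  have hsub : uIcc a b ⊆ Ioi 0 := fun s hs => lt_of_lt_of_le (lt_min ha hb) hs.1
  exact ((hw.mono hsub).inv₀ fun s hs => (hw_pos s (hsub hs)).ne').intervalIntegrable

lemma integral_inv_weight_nonneg (hw_pos : ∀ t, 0 < t → 0 < w t) {a b : ℝ} (ha : 0 < a)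
    (hab : a ≤ b) : 0 ≤ ∫ s in a..b, (w s)⁻¹ :=
  intervalIntegral.integral_nonneg hab fun s hs => (inv_pos.2 (hw_pos s (ha.trans_le hs.1))).le

lemma fP_self : fP w μ η η = μ := by simp [fP]

lemma GP_self : GP w μ η η = μ := by simp [GP]

lemma le_fP (hw_pos : ∀ t, 0 < t → 0 < w t) (ht : t ∈ Ioc 0 η) : μ ≤ fP w μ η t :=
  le_add_of_nonneg_right (integral_inv_weight_nonneg hw_pos ht.1 ht.2)

lemma fP_pos (hw_pos : ∀ t, 0 < t → 0 < w t) (hμ : 0 < μ) (ht : t ∈ Ioc 0 η) :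
    0 < fP w μ η t :=
  hμ.trans_le (le_fP hw_pos ht)

lemma FP_pos (hw_pos : ∀ t, 0 < t → 0 < w t) (hμ : 0 < μ) (ht : t ∈ Ioc 0 η) :
    0 < FP w μ η t :=
  mul_pos (hw_pos t ht.1) (fP_pos hw_pos hμ ht)

lemma le_GP (hw_pos : ∀ t, 0 < t → 0 < w t) (hμ : 0 < μ) (ht : t ∈ Ioc 0 η) :
    μ ≤ GP w μ η t :=
  le_add_of_nonneg_right <| intervalIntegral.integral_nonneg ht.2 fun _ hs =>
    (inv_pos.2 (FP_pos hw_pos hμ ⟨ht.1.trans_le hs.1, hs.2⟩)).le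

lemma GP_pos (hw_pos : ∀ t, 0 < t → 0 < w t) (hμ : 0 < μ) (ht : t ∈ Ioc 0 η) :
    0 < GP w μ η t :=
  hμ.trans_le (le_GP hw_pos hμ ht)

lemma hasDerivAt_fP (hw_pos : ∀ t, 0 < t → 0 < w t) (hw : ContinuousOn w (Ioi 0))
    (hη : 0 < η) (ht : 0 < t) : HasDerivAt (fP w μ η) (-(w t)⁻¹) t := by
  have hc : ContinuousOn (fun s => (w s)⁻¹) (Ioi 0) := hw.inv₀ fun s hs => (hw_pos s hs).ne'
  exact (intervalIntegral.integral_hasDerivAt_left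
    (intervalIntegrable_inv_weight hw_pos hw ht hη)
    (hc.stronglyMeasurableAtFilter isOpen_Ioi t ht)
    (hc.continuousAt (Ioi_mem_nhds ht))).const_add μ

lemma continuousOn_FP (hw_pos : ∀ t, 0 < t → 0 < w t) (hw : ContinuousOn w (Ioi 0)) :
    ContinuousOn (FP w μ η) (Ioc 0 η) :=
  (hw.mono Ioc_subset_Ioi_self).mul fun _ ht =>
    (hasDerivAt_fP hw_pos hw (ht.1.trans_le ht.2) ht.1).continuousAt.continuousWithinAt

lemma hasDerivAt_log_fP (hw_pos : ∀ t, 0 < t → 0 < w t) (hw : ContinuousOn w (Ioi 0))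
    (hμ : 0 < μ) (ht : t ∈ Ioc 0 η) :
    HasDerivAt (fun s => Real.log (fP w μ η s)) (-(FP w μ η t)⁻¹) t := by
  refine ((hasDerivAt_fP hw_pos hw (ht.1.trans_le ht.2) ht.1).log
    (fP_pos hw_pos hμ ht).ne').congr_deriv ?_
  rw [FP, mul_inv, neg_div, div_eq_mul_inv]

lemma GP_eq_add_log (hw_pos : ∀ t, 0 < t → 0 < w t) (hw : ContinuousOn w (Ioi 0)) (hμ : 0 < μ)
    (ht : t ∈ Ioc 0 η) : GP w μ η t = μ + (Real.log (fP w μ η t) - Real.log μ) := by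
  have hsub : uIcc t η ⊆ Ioc 0 η := by
    rw [uIcc_of_le ht.2]
    exact fun s hs => ⟨ht.1.trans_le hs.1, hs.2⟩
  have hderiv : ∀ s ∈ uIcc t η,
      HasDerivAt (fun s => -Real.log (fP w μ η s)) ((FP w μ η s)⁻¹) s := fun s hs => by
    simpa using (hasDerivAt_log_fP hw_pos hw hμ (hsub hs)).fun_neg
  have hint : IntervalIntegrable (fun s => (FP w μ η s)⁻¹) volume t η :=
    (((continuousOn_FP hw_pos hw).mono hsub).inv₀ fun s hs =>
      (FP_pos hw_pos hμ (hsub hs)).ne').intervalIntegrable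
  rw [GP, intervalIntegral.integral_eq_sub_of_hasDerivAt hderiv hint, fP_self]
  ring

lemma hasDerivWithinAt_GP (hw_pos : ∀ t, 0 < t → 0 < w t) (hw : ContinuousOn w (Ioi 0))
    (hμ : 0 < μ) (ht : t ∈ Ioc 0 η) :
    HasDerivWithinAt (GP w μ η) (-(FP w μ η t)⁻¹) (Ioc 0 η) t :=
  (((hasDerivAt_log_fP hw_pos hw hμ ht).sub_const _).const_add μ).hasDerivWithinAt.congr_of_mem
    (fun _ hs => GP_eq_add_log hw_pos hw hμ hs) ht

lemma continuousOn_GP (hw_pos : ∀ t, 0 < t → 0 < w t) (hw : ContinuousOn w (Ioi 0))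
    (hμ : 0 < μ) : ContinuousOn (GP w μ η) (Ioc 0 η) := fun _ ht =>
  (hasDerivWithinAt_GP hw_pos hw hμ ht).continuousWithinAt

lemma IsAdmissibleWeight.exists_fP_le (hadm : IsAdmissibleWeight w)
    (hw_pos : ∀ t, 0 < t → 0 < w t) (hw : ContinuousOn w (Ioi 0)) (hμ : 0 < μ) (hη : 0 < η) :
    ∃ B K : ℝ, μ ≤ B ∧ 0 < K ∧
      ∀ t, 0 < t → fP w μ η t ≤ B * Real.exp (K / Real.sqrt t) := by
  obtain ⟨η₀, K, hη₀, hK, hbound⟩ := hadm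
  refine ⟨μ + 1 + |∫ s in η₀..η, (w s)⁻¹|, K, by linarith [abs_nonneg (∫ s in η₀..η, (w s)⁻¹)],
    hK, fun t ht => ?_⟩
  have hexp : 1 ≤ Real.exp (K / Real.sqrt t) := Real.one_le_exp (by positivity)
  have hnear : (∫ s in t..η₀, (w s)⁻¹) ≤ Real.exp (K / Real.sqrt t) := by
    rcases lt_or_ge t η₀ with htη | htη
    · exact hbound t ht htη
    · rw [intervalIntegral.integral_symm]
      linarith [integral_inv_weight_nonneg hw_pos hη₀ htη]
  have hfar := le_abs_self (∫ s in η₀..η, (w s)⁻¹)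
  rw [fP, ← intervalIntegral.integral_add_adjacent_intervals
    (intervalIntegrable_inv_weight hw_pos hw ht hη₀)
    (intervalIntegrable_inv_weight hw_pos hw hη₀ hη)]
  nlinarith [abs_nonneg (∫ s in η₀..η, (w s)⁻¹)]

lemma IsAdmissibleWeight.exists_mul_GP_sq_le (hadm : IsAdmissibleWeight w)
    (hw_pos : ∀ t, 0 < t → 0 < w t) (hw : ContinuousOn w (Ioi 0)) (hμ : 0 < μ) (hη : 0 < η) :
    ∃ M, 0 < M ∧ ∀ t ∈ Ioc 0 η, t * GP w μ η t ^ 2 ≤ M := by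
  obtain ⟨B, K, hμB, hK, hf⟩ := hadm.exists_fP_le hw_pos hw hμ hη
  have hB : 0 < B := hμ.trans_le hμB
  obtain ⟨N, hN⟩ : ∃ N, N = μ + (Real.log B - Real.log μ) := ⟨_, rfl⟩
  have hN_pos : 0 < N := by linarith [Real.log_le_log hμ hμB]
  refine ⟨(N * Real.sqrt η + K) ^ 2, by positivity, fun t ht => ?_⟩
  have hsqrt : 0 < Real.sqrt t := Real.sqrt_pos.2 ht.1
  have hG : GP w μ η t ≤ N + K / Real.sqrt t := by
    have hlog := Real.log_le_log (fP_pos hw_pos hμ ht) (hf t ht.1)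
    rw [Real.log_mul hB.ne' (Real.exp_ne_zero _), Real.log_exp] at hlog
    rw [GP_eq_add_log hw_pos hw hμ ht]
    linarith
  have hG_nonneg := (GP_pos hw_pos hμ ht).le
  calc t * GP w μ η t ^ 2 = (GP w μ η t * Real.sqrt t) ^ 2 := by
        rw [mul_pow, Real.sq_sqrt ht.1.le, mul_comm]
    _ ≤ ((N + K / Real.sqrt t) * Real.sqrt t) ^ 2 := by gcongr
    _ = (N * Real.sqrt t + K) ^ 2 := by field_simp
    _ ≤ (N * Real.sqrt η + K) ^ 2 := by
        gcongr
        exact ht.2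

end WeightFunctions

section Multiplier

variable {p q ε μ η t : ℝ} {w : ℝ → ℝ}

/-- The potential `(Λ_p + C₀ / G_η ^ 2) / F_η ^ p` of the refined Hardy inequality. -/
noncomputable def hardyPotential (p C₀ : ℝ) (w : ℝ → ℝ) (μ η t : ℝ) : ℝ :=
  ((1 - 1 / p) ^ p + C₀ / GP w μ η t ^ 2) / FP w μ η t ^ p

/-- The sharp Hardy multiplier `(1/p') ^ (p-1) * f_η ^ (1-p)`, which by itself solves the Riccati
equation with potential `Λ_p / F_η ^ p`, corrected by the factor `1 + ε / G_η`. -/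
noncomputable def hardyMultiplier (p ε : ℝ) (w : ℝ → ℝ) (μ η t : ℝ) : ℝ :=
  (1 - 1 / p) ^ (p - 1) * (fP w μ η t ^ (1 - p) * (1 + ε / GP w μ η t))

lemma one_sub_one_div_pos (hp : 1 < p) : 0 < 1 - 1 / p :=
  sub_pos.2 ((div_lt_one (by linarith)).2 hp)

lemma hardy_constant_rpow_sub_one (hpq : p.HolderConjugate q) :
    (1 - 1 / p) ^ (p - 1) = q * (1 - 1 / p) ^ p := by
  rw [Real.rpow_sub_one (one_sub_one_div_pos hpq.lt).ne', one_div, hpq.one_sub_inv, div_inv_eq_mul,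
    mul_comm]

lemma continuousOn_hardyPotential {C₀ : ℝ} (hw_pos : ∀ t, 0 < t → 0 < w t)
    (hw : ContinuousOn w (Ioi 0)) (hμ : 0 < μ) :
    ContinuousOn (hardyPotential p C₀ w μ η) (Ioc 0 η) := by
  refine (continuousOn_const.add (continuousOn_const.div ((continuousOn_GP hw_pos hw hμ).pow 2)
    fun t ht => ?_)).div ((continuousOn_FP hw_pos hw).rpow_const fun t ht => ?_) fun t ht => ?_
  · exact (pow_pos (GP_pos hw_pos hμ ht) 2).ne'
  · exact Or.inl (FP_pos hw_pos hμ ht).ne'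
  · exact (Real.rpow_pos_of_pos (FP_pos hw_pos hμ ht) p).ne'

lemma hardyMultiplier_pos (hp : 1 < p) (hε : 0 ≤ ε) (hw_pos : ∀ t, 0 < t → 0 < w t)
    (hμ : 0 < μ) (ht : t ∈ Ioc 0 η) : 0 < hardyMultiplier p ε w μ η t := by
  have hθ := one_sub_one_div_pos hp
  have hf := fP_pos hw_pos hμ ht
  have hG := GP_pos hw_pos hμ ht
  unfold hardyMultiplier
  positivity

lemma hasDerivWithinAt_hardyMultiplier (hw_pos : ∀ t, 0 < t → 0 < w t)
    (hw : ContinuousOn w (Ioi 0)) (hμ : 0 < μ) (ht : t ∈ Ioc 0 η) :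
    HasDerivWithinAt (hardyMultiplier p ε w μ η)
      ((1 - 1 / p) ^ (p - 1) * (fP w μ η t ^ (-p) * (w t)⁻¹ *
        ((p - 1) * (1 + ε / GP w μ η t) + ε / GP w μ η t ^ 2))) (Ioc 0 η) t := by
  have hf := fP_pos hw_pos hμ ht
  have hG := GP_pos hw_pos hμ ht
  have hpow := ((hasDerivAt_fP (μ := μ) hw_pos hw (ht.1.trans_le ht.2) ht.1).rpow_const
    (p := 1 - p) (Or.inl hf.ne')).hasDerivWithinAt (s := Ioc 0 η)
  have hcorr := ((hasDerivWithinAt_GP hw_pos hw hμ ht).fun_inv hG.ne').const_mul ε |>.const_add 1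
  simp only [← div_eq_mul_inv] at hcorr
  refine ((hpow.mul hcorr).const_mul _).congr_deriv ?_
  have hexp : fP w μ η t ^ (1 - p) = fP w μ η t ^ (-p) * fP w μ η t := by
    rw [← Real.rpow_add_one hf.ne', neg_add_eq_sub]
  rw [show 1 - p - 1 = -p by ring, hexp, FP]
  field_simp
  ring

lemma Wp_rpow_one_sub_conj (hpq : p.HolderConjugate q) (hw : 0 < w t) :
    Wp w p t ^ (1 - q) = (w t)⁻¹ := by
  rw [Wp, ← Real.rpow_mul hw.le, ← Real.rpow_neg_one]
  congr 1
  linear_combination -hpq.sub_one_mul_conj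

lemma Wp_div_FP_rpow (hw : 0 < w t) (hf : 0 < fP w μ η t) :
    Wp w p t / FP w μ η t ^ p = fP w μ η t ^ (-p) * (w t)⁻¹ := by
  rw [Wp, FP, Real.mul_rpow hw.le hf.le, Real.rpow_neg hf.le, Real.rpow_sub_one hw.ne']
  field_simp

lemma hardyMultiplier_rpow_conj (hpq : p.HolderConjugate q) (hf : 0 ≤ fP w μ η t)
    (hG : 0 ≤ 1 + ε / GP w μ η t) :
    hardyMultiplier p ε w μ η t ^ q
      = (1 - 1 / p) ^ p * (fP w μ η t ^ (-p) * (1 + ε / GP w μ η t) ^ q) := by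
  have hθ := one_sub_one_div_pos hpq.lt
  have hexp : (1 - p) * q = -p := by linear_combination -hpq.sub_one_mul_conj
  rw [hardyMultiplier, Real.mul_rpow (by positivity) (by positivity),
    Real.mul_rpow (by positivity) hG, ← Real.rpow_mul hθ.le, ← Real.rpow_mul hf, hexp,
    hpq.sub_one_mul_conj]

lemma hardyMultiplier_riccati {τ : ℝ} (hpq : p.HolderConjugate q) (hε : 0 ≤ ε)
    (hεp : 9 * p * ε ≤ 1) (hεq : 2 * q * ε ≤ μ) (hw_pos : ∀ t, 0 < t → 0 < w t) (hμ : 0 < μ)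
    (ht : t ∈ Ioc 0 η) (hτ : 0 ≤ τ) (hτ_lt : τ < 1)
    (hτG : q * τ * GP w μ η t ^ 2 ≤ ε ^ 2) :
    (p - 1) * hardyMultiplier p ε w μ η t ^ q * ((1 - τ) * Wp w p t) ^ (1 - q)
        + (1 + τ) * (hardyPotential p ((1 - 1 / p) ^ p * ε ^ 2) w μ η t * Wp w p t)
      ≤ (1 - 1 / p) ^ (p - 1) * (fP w μ η t ^ (-p) * (w t)⁻¹ *
        ((p - 1) * (1 + ε / GP w μ η t) + ε / GP w μ η t ^ 2)) := by
  have hf := fP_pos hw_pos hμ ht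
  have hw0 := hw_pos t ht.1
  have hG := GP_pos hw_pos hμ ht
  have hΛ : 0 < (1 - 1 / p) ^ p := Real.rpow_pos_of_pos (one_sub_one_div_pos hpq.lt) p
  have hq := hpq.symm.pos
  have hW : 0 ≤ Wp w p t := Real.rpow_nonneg hw0.le _
  have hyq : 2 * q * (ε / GP w μ η t) ≤ 1 := by
    rw [← mul_div_assoc, div_le_one hG]
    exact hεq.trans (le_GP hw_pos hμ ht)
  have hscalar := perturbed_hardy_constant_le hpq (by positivity) hyq hτ
    (by rwa [div_pow, le_div_iff₀ (by positivity)])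
  have hgain : 9 * p * q * (ε / GP w μ η t) ^ 2 ≤ q * (ε / GP w μ η t ^ 2) := by
    calc 9 * p * q * (ε / GP w μ η t) ^ 2 = 9 * p * ε * (q * (ε / GP w μ η t ^ 2)) := by
          ring
      _ ≤ q * (ε / GP w μ η t ^ 2) := mul_le_of_le_one_left (by positivity) hεp
  rw [hardyMultiplier_rpow_conj hpq hf.le (by positivity),
    Real.mul_rpow (sub_pos.2 hτ_lt).le hW, Wp_rpow_one_sub_conj hpq hw0, hardyPotential,
    div_mul_eq_mul_div, mul_div_assoc, Wp_div_FP_rpow hw0 hf, hardy_constant_rpow_sub_one hpq]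
  obtain ⟨k, hk⟩ : ∃ k, k = (1 - 1 / p) ^ p * (fP w μ η t ^ (-p) * (w t)⁻¹) := ⟨_, rfl⟩
  have hk_nonneg : 0 ≤ k := by rw [hk]; positivity
  calc _ = k * ((p - 1) * ((1 + ε / GP w μ η t) ^ q * (1 - τ) ^ (1 - q))
        + (1 + (ε / GP w μ η t) ^ 2) * (1 + τ)) := by rw [hk]; ring
    _ ≤ k * (p * (1 + ε / GP w μ η t) + q * (ε / GP w μ η t ^ 2)) :=
        mul_le_mul_of_nonneg_left (by linarith) hk_nonneg
    _ = _ := by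
        rw [hk]
        linear_combination (-(1 - 1 / p) ^ p * (fP w μ η t ^ (-p) * (w t)⁻¹)
          * (1 + ε / GP w μ η t)) * hpq.sub_one_mul_conj

end Multiplier

theorem integral_remainder_sub_le_of_mul_GP_sq_le {p q ε μ η : ℝ} {w ρ u u' : ℝ → ℝ}
    (hpq : p.HolderConjugate q) (hε : 0 ≤ ε) (hεp : 9 * p * ε ≤ 1) (hεq : 2 * q * ε ≤ μ)
    (hμ : 0 < μ) (hw_pos : ∀ t, 0 < t → 0 < w t) (hw : ContinuousOn w (Ioi 0)) (hη : 0 < η)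
    (hρ : ContinuousOn ρ (Ioc 0 η)) (hρ_nonneg : ∀ t ∈ Ioc 0 η, 0 ≤ ρ t)
    (hρG : ∀ t ∈ Ioc 0 η, q * ρ t * GP w μ η t ^ 2 ≤ ε ^ 2)
    (hu : IsHardyTestFunction η u u') :
    (∫ t in (0 : ℝ)..η,
        (|u' t| ^ p + |u t| ^ p * hardyPotential p ((1 - 1 / p) ^ p * ε ^ 2) w μ η t)
          * Wp w p t * ρ t)
        - hardyMultiplier p ε w μ η η * |u η| ^ p
      ≤ ∫ t in (0 : ℝ)..η,
        (|u' t| ^ p - |u t| ^ p * hardyPotential p ((1 - 1 / p) ^ p * ε ^ 2) w μ η t)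
          * Wp w p t := by
  have hρ_lt : ∀ t ∈ Ioc 0 η, ρ t < 1 := fun t ht => by
    have hεG : ε < GP w μ η t := by nlinarith [le_GP hw_pos hμ ht, hpq.symm.lt]
    have hε_sq : ε ^ 2 < 1 * GP w μ η t ^ 2 := by
      rw [one_mul]
      gcongr
    have hqρ : q * ρ t < 1 :=
      lt_of_mul_lt_mul_right ((hρG t ht).trans_lt hε_sq) (by positivity)
    exact (le_mul_of_one_le_left (hρ_nonneg t ht) hpq.symm.lt.le).trans_lt hqρ
  have hWp : ContinuousOn (Wp w p) (Ioc 0 η) :=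
    (hw.mono Ioc_subset_Ioi_self).rpow_const fun t ht => Or.inl (hw_pos t ht.1).ne'
  exact integral_remainder_sub_le_of_riccati hpq hη hWp (continuousOn_hardyPotential hw_pos hw hμ)
    hρ (fun t ht => Real.rpow_pos_of_pos (hw_pos t ht.1) _) hρ_lt
    (fun t ht => (hardyMultiplier_pos hpq.lt hε hw_pos hμ ht).le)
    (fun t ht => hasDerivWithinAt_hardyMultiplier hw_pos hw hμ ht)
    (fun t ht => hardyMultiplier_riccati hpq hε hεp hεq hw_pos hμ ht (hρ_nonneg t ht)
      (hρ_lt t ht) (hρG t ht)) hu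

theorem hardy_P_admissible_refined_general (p μ : ℝ) (hp : 1 < p) (hμ : 0 < μ) :
    ∃ C₀ L : ℝ, 0 < C₀ ∧ 0 < L ∧
      ∀ w : ℝ → ℝ, (∀ t, 0 < t → 0 < w t) → ContinuousOn w (Ioi 0) → IsAdmissibleWeight w →
      ∀ η : ℝ, 0 < η → ∃ C₁ : ℝ, 0 < C₁ ∧
        ∀ u u' : ℝ → ℝ, IsHardyTestFunction η u u' →
          (∫ t in (0 : ℝ)..η,
              (|u' t| ^ p - |u t| ^ p / FP w μ η t ^ p *
                  ((1 - 1 / p) ^ p + C₀ / GP w μ η t ^ 2)) * Wp w p t)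
          ≥ C₁ * (∫ t in (0 : ℝ)..η,
              (|u' t| ^ p + |u t| ^ p / FP w μ η t ^ p *
                  ((1 - 1 / p) ^ p + C₀ / GP w μ η t ^ 2)) * Wp w p t * t)
            - L * |u η| ^ p := by
  have hpq := Real.HolderConjugate.conjExponent hp
  set q := p.conjExponent
  have hq := hpq.symm.pos
  obtain ⟨ε, hε, hεp, hεq⟩ : ∃ ε, 0 < ε ∧ 9 * p * ε ≤ 1 ∧ 2 * q * ε ≤ μ := by
    refine ⟨min (1 / (9 * p)) (μ / (2 * q)), by positivity, ?_, ?_⟩ <;>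
      rw [← le_div_iff₀' (by positivity)]
    exacts [min_le_left _ _, min_le_right _ _]
  have hθ := one_sub_one_div_pos hp
  refine ⟨(1 - 1 / p) ^ p * ε ^ 2, (1 - 1 / p) ^ (p - 1) * (μ ^ (1 - p) * (1 + ε / μ)),
    by positivity, by positivity, fun w hw_pos hw hadm η hη => ?_⟩
  obtain ⟨C₁, hC₁, hC₁G⟩ : ∃ C₁, 0 < C₁ ∧
      ∀ t ∈ Ioc 0 η, q * (C₁ * t) * GP w μ η t ^ 2 ≤ ε ^ 2 := by
    obtain ⟨M, hM, hMG⟩ := hadm.exists_mul_GP_sq_le hw_pos hw hμ hη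
    refine ⟨ε ^ 2 / (q * M), by positivity, fun t ht => ?_⟩
    calc q * (ε ^ 2 / (q * M) * t) * GP w μ η t ^ 2
        = ε ^ 2 * (t * GP w μ η t ^ 2 / M) := by field_simp
      _ ≤ ε ^ 2 := mul_le_of_le_one_right (by positivity) ((div_le_one hM).2 (hMG t ht))
  refine ⟨C₁, hC₁, fun u u' hu => ?_⟩
  have hhardy := integral_remainder_sub_le_of_mul_GP_sq_le (ρ := fun t => C₁ * t) hpq hε.le hεp
    hεq hμ hw_pos hw hη (by fun_prop) (fun t ht => mul_nonneg hC₁.le ht.1.le) hC₁G hu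
  rw [← intervalIntegral.integral_const_mul]
  simpa only [hardyPotential, hardyMultiplier, fP_self, GP_self, mul_div_assoc,
    div_mul_eq_mul_div, mul_left_comm C₁] using hhardy

/-- For admissible `w ∈ P(ℝ₊)` and all sufficiently small `η > 0`,
a refined weighted Hardy inequality holds with first-order (in `t`) remainder and
boundary term `- L |u(η)|^p`. -/
theorem hardy_P_admissible_refined (p μ : ℝ) (hp : 1 < p) (hμ : 0 < μ)
    (w : ℝ → ℝ)
    (hw_pos : ∀ t, 0 < t → 0 < w t)
    (hw_smooth : ContDiffOn ℝ 1 w (Set.Ioi 0))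
    (hw_lim : ∃ a : ENNReal, Filter.Tendsto (fun t => ENNReal.ofReal (w t))
        (nhdsWithin (0:ℝ) (Set.Ioi 0)) (nhds a))
    (hwP : ∀ b, 0 < b → ¬ MeasureTheory.IntegrableOn (fun s => (w s)⁻¹) (Set.Ioo 0 b))
    (hadm : ∃ η₀ K : ℝ, 0 < η₀ ∧ 0 < K ∧ ∀ t, 0 < t → t < η₀ →
        (∫ s in t..η₀, (w s)⁻¹) ≤ Real.exp (K / Real.sqrt t)) :
    ∃ η₁ : ℝ, 0 < η₁ ∧ ∀ η : ℝ, 0 < η → η ≤ η₁ →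
      ∃ C₀ C₁ L : ℝ, 0 < C₀ ∧ 0 < C₁ ∧ 0 < L ∧
        ∀ u u' : ℝ → ℝ,
          (∀ t ∈ Set.Ioc (0:ℝ) η, HasDerivWithinAt u (u' t) (Set.Ioc (0:ℝ) η) t) →
          ContinuousOn u' (Set.Ioc (0:ℝ) η) →
          (∃ a, 0 < a ∧ ∀ t ≤ a, u t = 0) →
          (∫ t in (0:ℝ)..η,
              (|u' t| ^ p - |u t| ^ p / FP w μ η t ^ p *
                  ((1 - 1 / p) ^ p + C₀ / GP w μ η t ^ 2)) * Wp w p t)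
          ≥ C₁ * (∫ t in (0:ℝ)..η,
              (|u' t| ^ p + |u t| ^ p / FP w μ η t ^ p *
                  ((1 - 1 / p) ^ p + C₀ / GP w μ η t ^ 2)) * Wp w p t * t)
            - L * |u η| ^ p := by
  obtain ⟨C₀, L, hC₀, hL, h⟩ := hardy_P_admissible_refined_general p μ hp hμ
  refine ⟨1, one_pos, fun η hη _ => ?_⟩
  obtain ⟨C₁, hC₁, h⟩ := h w hw_pos hw_smooth.continuousOn hadm η hη
  exact ⟨C₀, C₁, L, hC₀, hC₁, hL, fun u u' hu hu' ⟨a, ha, hz⟩ =>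
    h u u' ⟨hu, hu', a, ha, fun t ht => hz t ht.2⟩⟩
end

section
/- Let w ∈ Q(ℝ₊) be admissible, i.e. there exist η₀>0 and K₀>0 with ∫_0^t w(s)^{-1} ds ≥ e^{-K₀/√t} for all 0<t<η₀. Then for every μ>0 there exist positive numbers η and K such that √t · G_η(t) ≤ K for all t ∈ (0,η). -/
open MeasureTheory Set

/-- `f_η(t) = ∫_0^t w(s)⁻¹ ds`  (case `w ∈ Q(ℝ₊)`). -/
noncomputable def fQ (w : ℝ → ℝ) (t : ℝ) : ℝ := ∫ s in (0:ℝ)..t, (w s)⁻¹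

/-- `F_η(t) = w(t) f_η(t)`. -/
noncomputable def FQ (w : ℝ → ℝ) (t : ℝ) : ℝ := w t * fQ w t

/-- `G_η(t) = μ + ∫_t^η F_η(s)⁻¹ ds`. -/
noncomputable def GQ (w : ℝ → ℝ) (μ η t : ℝ) : ℝ := μ + ∫ s in t..η, (FQ w s)⁻¹

/-!
Since `F⁻¹ = f' / f` is a logarithmic derivative, `G(t) = μ + log f(η) - log f(t)`, and
admissibility says exactly that `-√t * log f(t) ≤ K₀`. The integration only needs `f` to be an
indefinite integral: it is then absolutely continuous, and so is `log f` on any compact interval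
on which `f` does not vanish, so that the fundamental theorem of calculus applies to `log f`.
-/

section AbsolutelyContinuous

variable {a b : ℝ}

theorem absolutelyContinuousOnInterval_comp_of_lipschitzOnWith {X Y : Type*}
    [PseudoMetricSpace X] [PseudoMetricSpace Y] {φ : X → Y} {f : ℝ → X} {C : NNReal}
    (hφ : LipschitzOnWith C φ (f '' uIcc a b)) (hf : AbsolutelyContinuousOnInterval f a b) :
    AbsolutelyContinuousOnInterval (φ ∘ f) a b := by
  refine squeeze_zero' (.of_forall fun E => Finset.sum_nonneg fun _ _ => dist_nonneg) ?_
    (by simpa only [mul_zero] using Filter.Tendsto.const_mul (C : ℝ) hf)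
  filter_upwards [Filter.mem_inf_of_right (Filter.mem_principal_self _)] with E hE
  rw [Finset.mul_sum]
  exact Finset.sum_le_sum fun i hi => hφ.dist_le_mul
    _ (mem_image_of_mem f (hE.1 i hi).1) _ (mem_image_of_mem f (hE.1 i hi).2)

theorem absolutelyContinuousOnInterval_comp_of_contDiffOn {E : Type*} [NormedAddCommGroup E]
    [NormedSpace ℝ E] {φ : ℝ → E} {f : ℝ → ℝ} (hφ : ContDiffOn ℝ 1 φ (f '' uIcc a b))
    (hf : AbsolutelyContinuousOnInterval f a b) :
    AbsolutelyContinuousOnInterval (φ ∘ f) a b := by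
  have hconvex : Convex ℝ (f '' uIcc a b) :=
    (isPreconnected_uIcc.image f hf.continuousOn).ordConnected.convex
  have hcompact : IsCompact (f '' uIcc a b) := isCompact_uIcc.image_of_continuousOn hf.continuousOn
  obtain ⟨C, hC⟩ := hφ.exists_lipschitzOnWith one_ne_zero hconvex hcompact
  exact absolutelyContinuousOnInterval_comp_of_lipschitzOnWith hC hf

theorem integral_logDeriv_eq_log_sub_log {f : ℝ → ℝ}
    (hf : AbsolutelyContinuousOnInterval f a b) (hne : ∀ x ∈ uIcc a b, f x ≠ 0) :
    ∫ x in a..b, logDeriv f x = Real.log (f b) - Real.log (f a) := by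
  have hlog : ContDiffOn ℝ 1 Real.log (f '' uIcc a b) :=
    Real.contDiffOn_log.mono (image_subset_iff.2 hne)
  refine .trans ?_ (absolutelyContinuousOnInterval_comp_of_contDiffOn hlog hf).integral_deriv_eq_sub
  refine intervalIntegral.integral_congr_ae ?_
  filter_upwards [hf.ae_differentiableAt] with x hx hxab
  have hx' := uIoc_subset_uIcc hxab
  exact (Real.deriv_log_comp_eq_logDeriv (hx hx') (hne x hx')).symm

theorem integral_div_primitive_eq_log_sub_log {g : ℝ → ℝ} {c p q : ℝ}
    (hg : IntervalIntegrable g volume a b) (hc : c ∈ uIcc a b) (hpq : uIcc p q ⊆ uIcc a b)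
    (hne : ∀ x ∈ uIcc p q, ∫ u in c..x, g u ≠ 0) :
    ∫ x in p..q, g x / ∫ u in c..x, g u =
      Real.log (∫ u in c..q, g u) - Real.log (∫ u in c..p, g u) := by
  have hac := (hg.absolutelyContinuousOnInterval_intervalIntegral hc).mono hpq
  rw [← integral_logDeriv_eq_log_sub_log hac hne]
  refine intervalIntegral.integral_congr_ae ?_
  filter_upwards [hg.ae_hasDerivAt_integral] with x hx hxpq
  rw [logDeriv_apply, (hx (hpq (uIoc_subset_uIcc hxpq)) c hc).deriv]

end AbsolutelyContinuous

theorem mul_sub_log_le {r R K y : ℝ} (hr : 0 < r) (hrR : r ≤ R)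
    (hy : Real.exp (-K / r) ≤ y) (m : ℝ) : r * (m - Real.log y) ≤ R * |m| + K := by
  have hlog : -K / r ≤ Real.log y := (Real.le_log_iff_exp_le ((Real.exp_pos _).trans_le hy)).2 hy
  calc r * (m - Real.log y) ≤ r * (|m| - -K / r) := by gcongr; exact le_abs_self m
    _ = r * |m| + K := by field_simp; ring
    _ ≤ R * |m| + K := by gcongr

/-- Here `g` plays the role of `1 / w`, so that `g s / ∫ u in 0..s, g u` is `F(s)⁻¹`, and `r` that
of the square root. -/
theorem sqrt_mul_G_bounded_Q_general {g r : ℝ → ℝ} {η₀ K₀ R : ℝ}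
    (hg : IntervalIntegrable g volume 0 η₀) (hr : ∀ t ∈ Ioo 0 η₀, 0 < r t ∧ r t ≤ R)
    (hadm : ∀ t ∈ Ioo 0 η₀, Real.exp (-K₀ / r t) ≤ ∫ s in 0..t, g s)
    (μ : ℝ) {η : ℝ} (hη : η ∈ Ioo 0 η₀) :
    ∃ K, 0 < K ∧ ∀ t ∈ Ioo 0 η, r t * (μ + ∫ s in t..η, g s / ∫ u in 0..s, g u) ≤ K := by
  refine ⟨max (R * |μ + Real.log (∫ s in 0..η, g s)| + K₀) 1, by positivity, fun t ht => ?_⟩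
  have htη₀ : t ∈ Ioo 0 η₀ := ⟨ht.1, ht.2.trans hη.2⟩
  have hsub : uIcc t η ⊆ Ioo 0 η₀ := ordConnected_Ioo.uIcc_subset htη₀ hη
  have hne : ∀ s ∈ uIcc t η, ∫ u in 0..s, g u ≠ 0 := fun s hs =>
    ((Real.exp_pos _).trans_le (hadm s (hsub hs))).ne'
  rw [integral_div_primitive_eq_log_sub_log hg left_mem_uIcc
    (hsub.trans (Ioo_subset_Icc_self.trans Icc_subset_uIcc)) hne, ← add_sub_assoc]
  exact le_max_of_le_left (mul_sub_log_le (hr t htη₀).1 (hr t htη₀).2 (hadm t htη₀) _)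

/-- If `w ∈ Q(ℝ₊)` is admissible, then for every `μ > 0` there are
`η, K > 0` with `√t · G_η(t) ≤ K` on `(0,η)`. -/
theorem sqrt_mul_G_bounded_Q (w : ℝ → ℝ)
    (hw_pos : ∀ t, 0 < t → 0 < w t)
    (hw_smooth : ContDiffOn ℝ 1 w (Set.Ioi 0))
    (hw_lim : ∃ a : ENNReal, Filter.Tendsto (fun t => ENNReal.ofReal (w t))
        (nhdsWithin (0:ℝ) (Set.Ioi 0)) (nhds a))
    (hwQ : ∀ b, 0 < b → MeasureTheory.IntegrableOn (fun s => (w s)⁻¹) (Set.Ioo 0 b))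
    (hadm : ∃ η₀ K₀ : ℝ, 0 < η₀ ∧ 0 < K₀ ∧ ∀ t, 0 < t → t < η₀ →
        Real.exp (-K₀ / Real.sqrt t) ≤ ∫ s in (0:ℝ)..t, (w s)⁻¹) :
    ∀ μ : ℝ, 0 < μ → ∃ η K : ℝ, 0 < η ∧ 0 < K ∧
      ∀ t ∈ Set.Ioo (0:ℝ) η, Real.sqrt t * GQ w μ η t ≤ K := by
  intro μ _
  obtain ⟨η₀, K₀, hη₀, -, hexp⟩ := hadm
  obtain ⟨K, hK, hbound⟩ := sqrt_mul_G_bounded_Q_general (r := Real.sqrt) (R := √η₀)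
    ((intervalIntegrable_iff_integrableOn_Ioo_of_le hη₀.le).2 (hwQ η₀ hη₀))
    (fun t ht => ⟨Real.sqrt_pos.2 ht.1, Real.sqrt_le_sqrt ht.2.le⟩)
    (fun t ht => hexp t ht.1 ht.2) μ ⟨half_pos hη₀, half_lt_self hη₀⟩
  exact ⟨η₀ / 2, K, half_pos hη₀, hK, by
    simpa only [GQ, FQ, fQ, mul_inv, div_eq_mul_inv] using hbound⟩
end

section
/- Let p ≥ 2. Then there exists a positive number c(p), depending only on p, such that for every q ∈ [2,p] and every real number X one has |1+X|^p − 1 − pX ≥ c(p) |X|^q. -/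
/-! For a unit vector `e`, Bernoulli's inequality for
`‖e + x‖ ^ p = (1 + (2 * ⟪e, x⟫ + ‖x‖ ^ 2)) ^ (p / 2)` bounds the remainder
`‖e + x‖ ^ p - 1 - p * ⟪e, x⟫` below by a multiple of `‖x‖ ^ 2`. Clarkson's inequality for
`e` and `e + x` bounds it below by a multiple of `‖x‖ ^ p`, because at their midpoint `e + x / 2`
the function `‖·‖ ^ p` is at least its linearization `1 + p / 2 * ⟪e, x⟫`. As `‖x‖ ^ q` is at most
the larger of `‖x‖ ^ 2` and `‖x‖ ^ p`, the two bounds suffice. -/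

theorem rpow_le_max_rpow {t r q s : ℝ} (ht : 0 ≤ t) (hr : 0 ≤ r) (hq : q ∈ Set.Icc r s) :
    t ^ q ≤ max (t ^ r) (t ^ s) := by
  rcases le_total t 1 with ht1 | ht1
  · exact le_max_of_le_left (Real.rpow_le_rpow_of_exponent_ge' ht ht1 hr hq.1)
  · exact le_max_of_le_right (Real.rpow_le_rpow_of_exponent_le ht1 hq.2)

theorem sq_rpow_div_two {t : ℝ} (ht : 0 ≤ t) (p : ℝ) : (t ^ 2) ^ (p / 2) = t ^ p := by
  rw [Real.rpow_div_two_eq_sqrt p (sq_nonneg t), Real.sqrt_sq ht]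

section InnerProductSpace

variable {E : Type*} [NormedAddCommGroup E] [InnerProductSpace ℝ E] {p : ℝ}

theorem clarkson_inequality (hp : 2 ≤ p) (u v : E) :
    2 * (‖u‖ ^ p + ‖v‖ ^ p) ≤ ‖u + v‖ ^ p + ‖u - v‖ ^ p := by
  have hp' : 1 ≤ p / 2 := by linarith
  have hparallelogram : ‖u‖ ^ 2 + ‖v‖ ^ 2 = 1 / 2 * ‖u + v‖ ^ 2 + 1 / 2 * ‖u - v‖ ^ 2 := by
    linarith [parallelogram_law_with_norm ℝ u v]
  have hsuperadditive := Real.add_rpow_le_rpow_add (sq_nonneg ‖u‖) (sq_nonneg ‖v‖) hp'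
  have hconvex := (convexOn_rpow hp').2 (sq_nonneg ‖u + v‖) (sq_nonneg ‖u - v‖)
    one_half_pos.le one_half_pos.le (add_halves 1)
  simp only [smul_eq_mul] at hconvex
  rw [← hparallelogram] at hconvex
  simp only [sq_rpow_div_two (norm_nonneg _)] at hsuperadditive hconvex
  linarith

theorem mul_norm_sq_le_norm_add_rpow_sub (hp : 2 ≤ p) {e : E} (he : ‖e‖ = 1) (x : E) :
    p / 2 * ‖x‖ ^ 2 ≤ ‖e + x‖ ^ p - 1 - p * inner ℝ e x := by
  have hexpand : ‖e + x‖ ^ 2 = 1 + (2 * inner ℝ e x + ‖x‖ ^ 2) := by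
    rw [norm_add_sq_real, he]
    ring
  have hbernoulli := one_add_mul_self_le_rpow_one_add
    (s := 2 * inner ℝ e x + ‖x‖ ^ 2) (by linarith [sq_nonneg ‖e + x‖]) (p := p / 2) (by linarith)
  rw [← hexpand, sq_rpow_div_two (norm_nonneg _)] at hbernoulli
  linarith

theorem mul_norm_rpow_le_norm_add_rpow_sub (hp : 2 ≤ p) {e : E} (he : ‖e‖ = 1) (x : E) :
    2 ^ (1 - p) * ‖x‖ ^ p ≤ ‖e + x‖ ^ p - 1 - p * inner ℝ e x := by
  set y : E := (1 / 2 : ℝ) • x with hy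
  have hmidpoint : 1 + p / 2 * inner ℝ e x ≤ ‖e + y‖ ^ p := by
    have hremainder : 0 ≤ ‖e + y‖ ^ p - 1 - p * inner ℝ e y :=
      le_trans (by positivity) (mul_norm_sq_le_norm_add_rpow_sub hp he y)
    rw [hy, real_inner_smul_right] at hremainder
    linarith
  have hscale : 2 ^ (1 - p) * ‖x‖ ^ p = 2 * ‖y‖ ^ p := by
    rw [hy, norm_smul, Real.mul_rpow (norm_nonneg _) (norm_nonneg _), Real.rpow_sub two_pos,
      Real.norm_of_nonneg (by norm_num), Real.div_rpow zero_le_one zero_le_two, Real.one_rpow,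
      Real.rpow_one]
    ring
  have hclarkson := clarkson_inequality hp (e + y) y
  have hsum : e + y + y = e + x := by
    rw [hy]
    module
  rw [hsum, add_sub_cancel_right, he, Real.one_rpow] at hclarkson
  linarith

theorem elementary_ineq_p_ge_two_general {q : ℝ} (hq : q ∈ Set.Icc 2 p) {e : E} (he : ‖e‖ = 1)
    (x : E) : 2 ^ (1 - p) * ‖x‖ ^ q ≤ ‖e + x‖ ^ p - 1 - p * inner ℝ e x := by
  have hp : 2 ≤ p := hq.1.trans hq.2
  have hconst : (2 : ℝ) ^ (1 - p) ≤ p / 2 :=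
    (Real.rpow_le_one_of_one_le_of_nonpos one_le_two (by linarith)).trans (by linarith)
  calc 2 ^ (1 - p) * ‖x‖ ^ q
      ≤ 2 ^ (1 - p) * max (‖x‖ ^ (2 : ℝ)) (‖x‖ ^ p) := by
        gcongr
        exact rpow_le_max_rpow (norm_nonneg x) zero_le_two hq
    _ = max (2 ^ (1 - p) * ‖x‖ ^ 2) (2 ^ (1 - p) * ‖x‖ ^ p) := by
        rw [mul_max_of_nonneg _ _ (by positivity), Real.rpow_two]
    _ ≤ ‖e + x‖ ^ p - 1 - p * inner ℝ e x :=
        max_le ((mul_le_mul_of_nonneg_right hconst (sq_nonneg _)).trans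
          (mul_norm_sq_le_norm_add_rpow_sub hp he x)) (mul_norm_rpow_le_norm_add_rpow_sub hp he x)

end InnerProductSpace

/-- For `p ≥ 2` there is a constant `c(p) > 0`, independent of
`q ∈ [2,p]` and of `X ∈ ℝ`, such that `|1+X|^p − 1 − pX ≥ c(p) |X|^q`. -/
theorem elementary_ineq_p_ge_two (p : ℝ) (hp : 2 ≤ p) :
    ∃ c : ℝ, 0 < c ∧ ∀ q ∈ Set.Icc (2:ℝ) p, ∀ X : ℝ,
      |1 + X| ^ p - 1 - p * X ≥ c * |X| ^ q := by
  refine ⟨2 ^ (1 - p), by positivity, fun q hq X => ?_⟩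
  simpa using elementary_ineq_p_ge_two_general hq (norm_one (α := ℝ)) X
end

section
/- Let 1 < p ≤ 2. Then there exists a positive number c(p), depending only on p, such that for every M ≥ 1 and every real number X: if |X| ≤ M then |1+X|^p − 1 − pX ≥ c(p) M^{p-2} X², and if |X| ≥ M then |1+X|^p − 1 − pX ≥ c(p) |X|^p. -/
/-!
Since `p ≤ 2`, the second derivative of `‖·‖ ^ p` is at least `p (p - 1) R ^ (p - 2)` at every
nonzero point of the ball of radius `R`, so `‖·‖ ^ p` is strongly convex there with this constant.
With `R = ‖u‖ + ‖v‖` the ball contains `u` and `u + v`, and comparing with the tangent plane at `u`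
gives a remainder of at least `p (p - 1) / 2 * (‖u‖ + ‖v‖) ^ (p - 2) * ‖v‖ ^ 2`.
If `‖u‖, ‖v‖ ≤ M` then `‖u‖ + ‖v‖ ≤ 2 M`; for `u = 1` and `v = X` this is the first inequality
of the theorem, and the second one is its case `M = |X|`.
-/

open Set Filter Topology Metric

lemma hasDerivAt_rpow_sub_mul_sq (p m : ℝ) {s : ℝ} (hs : 0 < s) :
    HasDerivAt (fun s : ℝ ↦ s ^ p - m / 2 * s ^ 2) (p * s ^ (p - 1) - m * s) s := by
  have := (Real.hasDerivAt_rpow_const (p := p) (.inl hs.ne')).sub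
    ((hasDerivAt_pow 2 s).const_mul (m / 2))
  exact this.congr_deriv (by ring)

lemma hasDerivAt_mul_rpow_sub_mul (p m : ℝ) {s : ℝ} (hs : 0 < s) :
    HasDerivAt (fun s : ℝ ↦ p * s ^ (p - 1) - m * s) (p * (p - 1) * s ^ (p - 2) - m) s := by
  have := ((Real.hasDerivAt_rpow_const (p := p - 1) (.inl hs.ne')).const_mul p).sub
    ((hasDerivAt_id s).const_mul m)
  exact this.congr_deriv (by ring_nf)

section StrongConvexity

lemma add_lineDeriv_add_le_of_uniformConvexOn {E : Type*} [NormedAddCommGroup E] [NormedSpace ℝ E]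
    {s : Set E} {φ : ℝ → ℝ} {f : E → ℝ} {f' : ℝ} {x y : E} (hf : UniformConvexOn s φ f)
    (hx : x ∈ s) (hy : y ∈ s) (hf' : HasLineDerivAt ℝ f f' x (y - x)) :
    f x + f' + φ ‖x - y‖ ≤ f y := by
  have slope_le : ∀ᶠ t : ℝ in 𝓝[>] 0,
      t⁻¹ • (f (x + t • (y - x)) - f x) ≤ f y - f x - (1 - t) * φ ‖x - y‖ := by
    filter_upwards [Ioo_mem_nhdsGT one_pos] with t ⟨ht0, ht1⟩
    have convex := hf.2 hx hy (sub_nonneg.2 ht1.le) ht0.le (sub_add_cancel 1 t)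
    rw [show (1 - t) • x + t • y = x + t • (y - x) by module] at convex
    simp only [smul_eq_mul] at convex ⊢
    rw [inv_mul_le_iff₀ ht0]
    linarith
  have bound_tendsto : Tendsto (fun t : ℝ ↦ f y - f x - (1 - t) * φ ‖x - y‖) (𝓝[>] 0)
      (𝓝 (f y - f x - φ ‖x - y‖)) :=
    (Continuous.tendsto' (by fun_prop) 0 _ (by simp)).mono_left nhdsWithin_le_nhds
  linarith [le_of_tendsto_of_tendsto hf'.tendsto_slope_zero_right bound_tendsto slope_le]

variable {E : Type*} [NormedAddCommGroup E] [InnerProductSpace ℝ E]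

lemma strongConvexOn_comp_norm {g : ℝ → ℝ} {m R : ℝ} (hg : StrongConvexOn (Icc 0 R) m g)
    (hmono : MonotoneOn (fun s ↦ g s - m / 2 * s ^ 2) (Icc 0 R)) :
    StrongConvexOn (closedBall (0 : E) R) m (fun v ↦ g ‖v‖) := by
  rw [strongConvexOn_iff_convex] at hg ⊢
  simp only [Real.norm_eq_abs, sq_abs] at hg
  have image_subset : norm '' closedBall (0 : E) R ⊆ Icc 0 R := by
    rintro _ ⟨v, hv, rfl⟩
    exact ⟨norm_nonneg v, mem_closedBall_zero_iff.1 hv⟩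
  have ball_convex : Convex ℝ (closedBall (0 : E) R) := convex_closedBall 0 R
  -- The image is `{0}`, not `Icc 0 R`, when `E` is trivial.
  have image_convex : Convex ℝ (norm '' closedBall (0 : E) R) :=
    (ball_convex.isPreconnected.image norm continuous_norm.continuousOn).ordConnected.convex
  exact (hg.subset image_subset image_convex).comp (convexOn_norm ball_convex)
    (hmono.mono image_subset)

end StrongConvexity

section RpowOfExponentLeTwo

variable {p : ℝ}

lemma strongConvexOn_rpow (hp1 : 1 ≤ p) (hp2 : p ≤ 2) (R : ℝ) :
    StrongConvexOn (Icc 0 R) (p * (p - 1) * R ^ (p - 2)) (fun s ↦ s ^ p) := by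
  rw [strongConvexOn_iff_convex]
  simp only [Real.norm_eq_abs, sq_abs]
  have hcont := Real.continuous_rpow_const (zero_le_one.trans hp1)
  refine convexOn_of_hasDerivWithinAt2_nonneg (convex_Icc 0 R) (by fun_prop)
    (fun s hs ↦ (hasDerivAt_rpow_sub_mul_sq p _ ?_).hasDerivWithinAt)
    (fun s hs ↦ (hasDerivAt_mul_rpow_sub_mul p _ ?_).hasDerivWithinAt) fun s hs ↦ ?_
  all_goals rw [interior_Icc] at hs
  · exact hs.1
  · exact hs.1
  · have : R ^ (p - 2) ≤ s ^ (p - 2) :=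
      Real.rpow_le_rpow_of_nonpos hs.1 hs.2.le (sub_nonpos.2 hp2)
    have : 0 ≤ p * (p - 1) := mul_nonneg (by linarith) (by linarith)
    exact sub_nonneg.2 (by gcongr)

lemma monotoneOn_rpow_sub_mul_sq (hp1 : 1 ≤ p) (hp2 : p ≤ 2) (R : ℝ) :
    MonotoneOn (fun s : ℝ ↦ s ^ p - p * (p - 1) * R ^ (p - 2) / 2 * s ^ 2) (Icc 0 R) := by
  have hcont := Real.continuous_rpow_const (zero_le_one.trans hp1)
  refine monotoneOn_of_hasDerivWithinAt_nonneg (convex_Icc 0 R) (by fun_prop)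
    (fun s hs ↦ (hasDerivAt_rpow_sub_mul_sq p _ ?_).hasDerivWithinAt) fun s hs ↦ ?_
  all_goals rw [interior_Icc] at hs
  · exact hs.1
  · obtain ⟨hs0, hsR⟩ := hs
    have hle : p * (p - 1) ≤ p := mul_le_of_le_one_right (by linarith) (by linarith)
    have hR : 0 ≤ R := (hs0.trans hsR).le
    rw [sub_nonneg]
    calc p * (p - 1) * R ^ (p - 2) * s ≤ p * s ^ (p - 2) * s := by
          gcongr ?_ * s
          exact mul_le_mul hle (Real.rpow_le_rpow_of_nonpos hs0 hsR.le (sub_nonpos.2 hp2))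
            (by positivity) (by linarith)
      _ = p * s ^ (p - 1) := by
          rw [mul_assoc, ← Real.rpow_add_one hs0.ne']
          ring_nf

variable {E : Type*} [NormedAddCommGroup E] [InnerProductSpace ℝ E]

lemma strongConvexOn_norm_rpow (hp1 : 1 ≤ p) (hp2 : p ≤ 2) (R : ℝ) :
    StrongConvexOn (closedBall (0 : E) R) (p * (p - 1) * R ^ (p - 2)) (fun v ↦ ‖v‖ ^ p) :=
  strongConvexOn_comp_norm (strongConvexOn_rpow hp1 hp2 R) (monotoneOn_rpow_sub_mul_sq hp1 hp2 R)

lemma mul_rpow_mul_sq_le_norm_add_rpow_sub (hp1 : 1 < p) (hp2 : p ≤ 2) (u v : E) :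
    p * (p - 1) / 2 * (‖u‖ + ‖v‖) ^ (p - 2) * ‖v‖ ^ 2 ≤
      ‖u + v‖ ^ p - ‖u‖ ^ p - p * ‖u‖ ^ (p - 2) * inner ℝ u v := by
  have hu : u ∈ closedBall (0 : E) (‖u‖ + ‖v‖) := by simp
  have huv : u + v ∈ closedBall (0 : E) (‖u‖ + ‖v‖) := by simpa using norm_add_le u v
  have := add_lineDeriv_add_le_of_uniformConvexOn (strongConvexOn_norm_rpow hp1.le hp2 _) hu huv
    ((hasFDerivAt_norm_rpow u hp1).hasLineDerivAt _)
  simp only [add_sub_cancel_left, sub_add_cancel_left, norm_neg, smul_apply,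
    innerSL_apply_apply, smul_eq_mul] at this
  linarith

lemma mul_rpow_mul_sq_le_norm_add_rpow_sub_of_norm_le (hp1 : 1 < p) (hp2 : p ≤ 2) {M : ℝ}
    {u v : E} (hu : ‖u‖ ≤ M) (hv : ‖v‖ ≤ M) :
    p * (p - 1) / 2 * 2 ^ (p - 2) * M ^ (p - 2) * ‖v‖ ^ 2 ≤
      ‖u + v‖ ^ p - ‖u‖ ^ p - p * ‖u‖ ^ (p - 2) * inner ℝ u v := by
  rcases eq_or_ne v 0 with rfl | hv0
  · simp
  refine le_trans ?_ (mul_rpow_mul_sq_le_norm_add_rpow_sub hp1 hp2 u v)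
  have hM : 0 ≤ M := (norm_nonneg v).trans hv
  have : 0 ≤ p * (p - 1) := mul_nonneg (by linarith) (by linarith)
  rw [mul_assoc (p * (p - 1) / 2), ← Real.mul_rpow zero_le_two hM]
  gcongr p * (p - 1) / 2 * ?_ * ‖v‖ ^ 2
  exact Real.rpow_le_rpow_of_nonpos (by positivity) (by linarith) (sub_nonpos.2 hp2)

end RpowOfExponentLeTwo

/-- At `u = 0` the junk value of `‖u‖ ^ (p - 2)` is multiplied by `inner ℝ u v = 0`, in accordance
with the gradient of `‖·‖ ^ p` being `0` there. -/
theorem elementary_ineq_p_le_two_general (p : ℝ) (hp1 : 1 < p) (hp2 : p ≤ 2) :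
    ∃ c : ℝ, 0 < c ∧ ∀ (E : Type*) [NormedAddCommGroup E] [InnerProductSpace ℝ E] (M : ℝ) (u v : E),
      ‖u‖ ≤ M →
        (‖v‖ ≤ M → c * M ^ (p - 2) * ‖v‖ ^ 2 ≤
          ‖u + v‖ ^ p - ‖u‖ ^ p - p * ‖u‖ ^ (p - 2) * inner ℝ u v) ∧
        (M ≤ ‖v‖ → c * ‖v‖ ^ p ≤
          ‖u + v‖ ^ p - ‖u‖ ^ p - p * ‖u‖ ^ (p - 2) * inner ℝ u v) := by
  have : 0 < p - 1 := sub_pos.2 hp1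
  refine ⟨p * (p - 1) / 2 * 2 ^ (p - 2), by positivity, fun E _ _ M u v hu ↦
    ⟨mul_rpow_mul_sq_le_norm_add_rpow_sub_of_norm_le hp1 hp2 hu, fun hMv ↦ ?_⟩⟩
  have rpow_split : ‖v‖ ^ p = ‖v‖ ^ (p - 2) * ‖v‖ ^ 2 := by
    rw [← Real.rpow_add_natCast' (norm_nonneg v) (by norm_num; linarith)]
    norm_num
  rw [rpow_split, ← mul_assoc]
  exact mul_rpow_mul_sq_le_norm_add_rpow_sub_of_norm_le hp1 hp2 (hu.trans hMv) le_rfl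

/-- For `1 < p ≤ 2` there is a constant `c(p) > 0`, independent of
`M ≥ 1` and of `X ∈ ℝ`, such that `|1+X|^p − 1 − pX ≥ c(p) M^(p-2) X²` whenever
`|X| ≤ M`, and `|1+X|^p − 1 − pX ≥ c(p) |X|^p` whenever `|X| ≥ M`. -/
theorem elementary_ineq_p_le_two (p : ℝ) (hp1 : 1 < p) (hp2 : p ≤ 2) :
    ∃ c : ℝ, 0 < c ∧ ∀ M : ℝ, 1 ≤ M → ∀ X : ℝ,
      (|X| ≤ M → |1 + X| ^ p - 1 - p * X ≥ c * M ^ (p - 2) * X ^ 2) ∧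
      (M ≤ |X| → |1 + X| ^ p - 1 - p * X ≥ c * |X| ^ p) := by
  obtain ⟨c, hc, h⟩ := elementary_ineq_p_le_two_general p hp1 hp2
  exact ⟨c, hc, fun M hM X ↦ by simpa using h ℝ M 1 X (by simpa using hM)⟩
end

section
/- Let 1<p<∞, η>0 and α > 1/p'. Then for every u ∈ C_c^1((0,η]) one has ∫_0^η |u'(t)|^p t^{αp} dt + Λ_{α,p}^{1/p'} η^{αp - (p-1)} |u(η)|^p ≥ Λ_{α,p} ∫_0^η |u(t)|^p t^{(α-1)p} dt. -/
open MeasureTheory Set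

open Filter Topology

/-! Write `c = α - 1/p'`, so that the two weights are `t ^ (c * p + (p - 1))` and `t ^ (c * p - 1)`,
and let `F t = sign c * |c| ^ (p - 1) * (‖u t‖ ^ p * t ^ (c * p))`. Differentiating `F` and applying
Young's inequality to `t * ‖u'‖` and `|c| * ‖u‖` gives
`|c| ^ p * ‖u‖ ^ p * t ^ (c * p - 1) - ‖u'‖ ^ p * t ^ (c * p + (p - 1)) ≤ F'`.
Integrate over `[δ, η]` and let `δ → 0`. In the supercritical case `F ≥ 0`, so the contribution of
the endpoint `δ` has the favourable sign and can be discarded; in the subcritical case `F ≤ 0`, and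
that contribution has to vanish in the limit. -/

theorem mul_mul_rpow_sub_one_le_rpow_add {p a b : ℝ} (hp : 1 < p) (ha : 0 ≤ a) (hb : 0 ≤ b) :
    p * (a * b ^ (p - 1)) ≤ a ^ p + (p - 1) * b ^ p := by
  have hp1 : p - 1 ≠ 0 := by linarith
  have hp0 : p ≠ 0 := by linarith
  have young := Real.young_inequality_of_nonneg ha (Real.rpow_nonneg hb (p - 1))
    (Real.HolderConjugate.conjExponent hp)
  rw [← Real.rpow_mul hb, Real.conjExponent, mul_div_cancel₀ _ hp1] at young
  calc p * (a * b ^ (p - 1)) ≤ p * (a ^ p / p + b ^ p / (p / (p - 1))) := by gcongr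
    _ = a ^ p + (p - 1) * b ^ p := by field_simp

theorem intervalIntegrable_and_integral_le_of_tendsto {f B : ℝ → ℝ} {a b L : ℝ} (hab : a < b)
    (hf : ∀ t ∈ Ioc a b, 0 ≤ f t) (hfi : ∀ δ ∈ Ioo a b, IntervalIntegrable f volume δ b)
    (hle : ∀ δ ∈ Ioo a b, ∫ t in δ..b, f t ≤ B δ) (hB : Tendsto B (𝓝[>] a) (𝓝 L)) :
    IntervalIntegrable f volume a b ∧ ∫ t in a..b, f t ≤ L := by
  obtain ⟨δ, -, hδ, hδa⟩ := exists_seq_strictAnti_tendsto' hab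
  have hBδ : Tendsto (fun n => B (δ n)) atTop (𝓝 L) :=
    hB.comp (tendsto_nhdsWithin_iff.2 ⟨hδa, .of_forall fun n => (hδ n).1⟩)
  have hfi_Ioc (n : ℕ) : IntegrableOn f (Ioc (δ n) b) :=
    (intervalIntegrable_iff_integrableOn_Ioc_of_le (hδ n).2.le).1 (hfi _ (hδ n))
  have hnorm (n : ℕ) : ∫ t in Ioc (δ n) b, ‖f t‖ = ∫ t in δ n..b, f t := by
    rw [intervalIntegral.integral_of_le (hδ n).2.le]
    exact setIntegral_congr_fun measurableSet_Ioc fun t ht =>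
      Real.norm_of_nonneg (hf t ⟨(hδ n).1.trans ht.1, ht.2⟩)
  have hint : IntegrableOn f (Ioc a b) := by
    refine integrableOn_Ioc_of_intervalIntegral_norm_bounded_left (I := L + 1) hfi_Ioc hδa
      ((hBδ.eventually_le_const (lt_add_one L)).mono fun n hn => ?_)
    exact (hnorm n).trans_le ((hle _ (hδ n)).trans hn)
  have hint' : IntervalIntegrable f volume a b :=
    (intervalIntegrable_iff_integrableOn_Ioc_of_le hab.le).2 hint
  have hlim : Tendsto (fun n => ∫ t in δ n..b, f t) atTop (𝓝 (∫ t in a..b, f t)) :=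
    (intervalIntegral.continuousOn_primitive_interval_left
      ((intervalIntegrable_iff' (by finiteness)).1 hint') a left_mem_uIcc).tendsto.comp
      (tendsto_nhdsWithin_iff.2 ⟨hδa, .of_forall fun n =>
        Icc_subset_uIcc (Ioo_subset_Icc_self (hδ n))⟩)
  exact ⟨hint', le_of_tendsto_of_tendsto' hlim hBδ fun n => hle _ (hδ n)⟩

theorem intervalIntegrable_of_continuousOn_Ioc_of_eventuallyEq_zero {F : Type*}
    [NormedAddCommGroup F] {f : ℝ → F} {a b : ℝ} (hab : a < b) (hf : ContinuousOn f (Ioc a b))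
    (hf0 : f =ᶠ[𝓝[>] a] 0) : IntervalIntegrable f volume a b := by
  obtain ⟨δ, hδ, hzero⟩ := (mem_nhdsGT_iff_exists_mem_Ioc_Ioo_subset hab).1 hf0
  have hleft : IntervalIntegrable f volume a δ := by
    refine (intervalIntegrable_const (c := (0 : F))).congr_uIoo fun t ht => ?_
    rw [uIoo_of_le hδ.1.le] at ht
    exact (hzero ht).symm
  have hright : IntervalIntegrable f volume δ b := by
    refine (hf.mono fun t ht => ?_).intervalIntegrable_of_Icc hδ.2
    exact ⟨hδ.1.trans_le ht.1, ht.2⟩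
  exact hleft.trans hright

theorem eventuallyEq_zero_of_hasDerivWithinAt {F : Type*} [NormedAddCommGroup F]
    [NormedSpace ℝ F] {u u' : ℝ → F} {a b : ℝ} (hab : a < b)
    (hu : ∀ t ∈ Ioc a b, HasDerivWithinAt u (u' t) (Ioc a b) t) (hu0 : u =ᶠ[𝓝[>] a] 0) :
    u' =ᶠ[𝓝[>] a] 0 := by
  filter_upwards [eventually_eventually_nhdsWithin.2 hu0, Ioo_mem_nhdsGT hab] with t htu ht
  rw [nhdsWithin_eq_nhds.2 (Ioi_mem_nhds ht.1)] at htu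
  have hderiv : HasDerivAt u (u' t) t :=
    (hu t (Ioo_subset_Ioc_self ht)).hasDerivAt (Ioc_mem_nhds ht.1 ht.2)
  exact hderiv.unique ((hasDerivAt_const t 0).congr_of_eventuallyEq htu)

section HardyInequality

variable {E : Type*} [NormedAddCommGroup E] {u u' : ℝ → E} {p c : ℝ}

theorem continuousOn_norm_rpow_mul_rpow {v : ℝ → E} {s : Set ℝ} {r : ℝ} (hp : 0 ≤ p)
    (hv : ContinuousOn v s) (hs : ∀ t ∈ s, 0 < t) :
    ContinuousOn (fun t => ‖v t‖ ^ p * t ^ r) s :=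
  (hv.norm.rpow_const fun _ _ => .inr hp).mul
    (continuousOn_id.rpow_const fun t ht => .inl (hs t ht).ne')

theorem intervalIntegrable_energy_of_eventuallyEq_zero {v : ℝ → E} {r η : ℝ} (hp : 0 < p)
    (hη : 0 < η) (hv : ContinuousOn v (Ioc 0 η)) (hv0 : v =ᶠ[𝓝[>] 0] 0) :
    IntervalIntegrable (fun t => ‖v t‖ ^ p * t ^ r) volume 0 η :=
  intervalIntegrable_of_continuousOn_Ioc_of_eventuallyEq_zero hη
    (continuousOn_norm_rpow_mul_rpow hp.le hv fun _ ht => ht.1)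
    (hv0.mono fun t ht => by simp [ht, hp.ne'])

/-- The boundary term `sign c * |c| ^ (p - 1) * t ^ (c * p) * ‖u t‖ ^ p` of the Hardy inequality
with `c = α - 1/p'`. The sign makes one formula serve both the supercritical case `0 < c` and the
subcritical case `c < 0`. -/
noncomputable def hardyFlux (p c : ℝ) (u : ℝ → E) (t : ℝ) : ℝ :=
  SignType.sign c * |c| ^ (p - 1) * (‖u t‖ ^ p * t ^ (c * p))

theorem sign_mul_abs_rpow_sub_one_mul_self (hp : p ≠ 0) :
    SignType.sign c * |c| ^ (p - 1) * c = |c| ^ p := by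
  rw [mul_right_comm, sign_mul_self, mul_comm,
    ← Real.rpow_add_one' (abs_nonneg c) (by simpa using hp), sub_add_cancel]

theorem hardyFlux_nonneg (hc : 0 ≤ c) {t : ℝ} (ht : 0 ≤ t) : 0 ≤ hardyFlux p c u t := by
  have hsign : (0 : ℝ) ≤ SignType.sign c := by
    rcases hc.eq_or_lt with rfl | hc <;> simp [*]
  unfold hardyFlux
  positivity

theorem tendsto_min_hardyFlux_zero
    (hu0 : c < 0 → Tendsto (fun t => ‖u t‖ ^ p * t ^ (c * p)) (𝓝[>] 0) (𝓝 0)) :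
    Tendsto (fun t => min (hardyFlux p c u t) 0) (𝓝[>] 0) (𝓝 0) := by
  rcases le_or_gt 0 c with hc | hc
  · refine tendsto_const_nhds.congr' (eventually_mem_nhdsWithin.mono fun t ht => ?_)
    exact (min_eq_right (hardyFlux_nonneg hc (mem_Ioi.1 ht).le)).symm
  · have hflux : Tendsto (hardyFlux p c u) (𝓝[>] 0) (𝓝 0) := by
      simpa [hardyFlux] using! (hu0 hc).const_mul (SignType.sign c * |c| ^ (p - 1))
    simpa using hflux.min (tendsto_const_nhds (x := 0))

variable [InnerProductSpace ℝ E]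

theorem abs_norm_rpow_sub_two_mul_inner_le (hp : 1 < p) (x y : E) :
    |‖x‖ ^ (p - 2) * inner ℝ x y| ≤ ‖x‖ ^ (p - 1) * ‖y‖ :=
  calc |‖x‖ ^ (p - 2) * inner ℝ x y| = ‖x‖ ^ (p - 2) * |inner ℝ x y| := by
        rw [abs_mul, abs_of_nonneg (by positivity)]
    _ ≤ ‖x‖ ^ (p - 2) * (‖x‖ * ‖y‖) := by gcongr; exact abs_real_inner_le_norm x y
    _ = ‖x‖ ^ (p - 1) * ‖y‖ := by
        rw [← mul_assoc, ← Real.rpow_add_one' (norm_nonneg x) (by linarith)]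
        ring_nf

theorem neg_norm_rpow_mul_norm_le_sign_mul_inner (hp : 1 < p) (x y : E) :
    -(‖x‖ ^ (p - 1) * ‖y‖) ≤ SignType.sign c * (‖x‖ ^ (p - 2) * inner ℝ x y) := by
  have hsign : |(SignType.sign c : ℝ)| ≤ 1 := by
    rcases lt_trichotomy c 0 with hc | rfl | hc <;> simp [*]
  refine neg_le_of_abs_le ?_
  rw [abs_mul]
  exact (mul_le_of_le_one_left (abs_nonneg _) hsign).trans
    (abs_norm_rpow_sub_two_mul_inner_le hp x y)

theorem hasDerivAt_hardyFlux {t : ℝ} {y : E} (hp : 1 < p) (ht : t ≠ 0) (hu : HasDerivAt u y t) :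
    HasDerivAt (hardyFlux p c u)
      (SignType.sign c * |c| ^ (p - 1) * (p * (‖u t‖ ^ (p - 2) * inner ℝ (u t) y) * t ^ (c * p)
        + ‖u t‖ ^ p * (c * p * t ^ (c * p - 1)))) t := by
  have hnorm : HasDerivAt (fun t => ‖u t‖ ^ p) (p * (‖u t‖ ^ (p - 2) * inner ℝ (u t) y)) t := by
    simpa [mul_assoc] using! (hasFDerivAt_norm_rpow (u t) hp).comp_hasDerivAt t hu
  exact (hnorm.mul (Real.hasDerivAt_rpow_const (.inl ht))).const_mul _

theorem hardy_pointwise_le_deriv_hardyFlux {t : ℝ} (x y : E) (hp : 1 < p) (ht : 0 < t) :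
    |c| ^ p * (‖x‖ ^ p * t ^ (c * p - 1)) - ‖y‖ ^ p * t ^ (c * p + (p - 1)) ≤
      SignType.sign c * |c| ^ (p - 1) * (p * (‖x‖ ^ (p - 2) * inner ℝ x y) * t ^ (c * p)
        + ‖x‖ ^ p * (c * p * t ^ (c * p - 1))) := by
  set s : ℝ := (SignType.sign c : ℝ)
  set w : ℝ := t ^ (c * p - 1) with hw
  set z : ℝ := ‖x‖ ^ (p - 2) * inner ℝ x y
  have : 0 ≤ w := by positivity
  have hwt : t ^ (c * p) = w * t := by
    rw [hw, ← Real.rpow_add_one ht.ne', sub_add_cancel]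
  have hwtp : t ^ (c * p + (p - 1)) = w * t ^ p := by
    rw [hw, ← Real.rpow_add ht]
    ring_nf
  have hinner : -(‖x‖ ^ (p - 1) * ‖y‖) ≤ s * z := neg_norm_rpow_mul_norm_le_sign_mul_inner hp x y
  have young : p * (‖y‖ * t * (|c| ^ (p - 1) * ‖x‖ ^ (p - 1))) ≤
      ‖y‖ ^ p * t ^ p + (p - 1) * (|c| ^ p * ‖x‖ ^ p) := by
    simpa only [Real.mul_rpow, norm_nonneg, abs_nonneg, ht.le] using
      mul_mul_rpow_sub_one_le_rpow_add hp (a := ‖y‖ * t) (b := |c| * ‖x‖)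
        (by positivity) (by positivity)
  rw [hwt, hwtp]
  calc |c| ^ p * (‖x‖ ^ p * w) - ‖y‖ ^ p * (w * t ^ p)
      = w * (p * |c| ^ p * ‖x‖ ^ p
          - (‖y‖ ^ p * t ^ p + (p - 1) * (|c| ^ p * ‖x‖ ^ p))) := by ring
    _ ≤ w * (p * |c| ^ p * ‖x‖ ^ p
          - p * (‖y‖ * t * (|c| ^ (p - 1) * ‖x‖ ^ (p - 1)))) := by gcongr
    _ = w * (p * |c| ^ p * ‖x‖ ^ p
          + p * t * |c| ^ (p - 1) * -(‖x‖ ^ (p - 1) * ‖y‖)) := by ring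
    _ ≤ w * (p * |c| ^ p * ‖x‖ ^ p + p * t * |c| ^ (p - 1) * (s * z)) := by gcongr
    _ = s * |c| ^ (p - 1) * (p * z * (w * t) + ‖x‖ ^ p * (c * p * w)) := by
        rw [← sign_mul_abs_rpow_sub_one_mul_self (c := c) (by linarith : p ≠ 0)]
        ring

theorem hardy_le_energy_add_hardyFlux_sub {a b : ℝ} (hp : 1 < p) (ha : 0 < a) (hab : a ≤ b)
    (huc : ContinuousOn u (Icc a b)) (hu : ∀ t ∈ Ioo a b, HasDerivAt u (u' t) t)
    (henergy : IntervalIntegrable (fun t => ‖u' t‖ ^ p * t ^ (c * p + (p - 1))) volume a b) :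
    |c| ^ p * (∫ t in a..b, ‖u t‖ ^ p * t ^ (c * p - 1)) ≤
      (∫ t in a..b, ‖u' t‖ ^ p * t ^ (c * p + (p - 1)))
        + (hardyFlux p c u b - hardyFlux p c u a) := by
  have hpos : ∀ t ∈ Icc a b, 0 < t := fun t ht => ha.trans_le ht.1
  have hmass : IntervalIntegrable (fun t => |c| ^ p * (‖u t‖ ^ p * t ^ (c * p - 1))) volume a b :=
    ((continuousOn_norm_rpow_mul_rpow (by linarith) huc hpos).intervalIntegrable_of_Icc
      hab).const_mul _
  have hflux : ContinuousOn (hardyFlux p c u) (Icc a b) :=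
    continuousOn_const.mul (continuousOn_norm_rpow_mul_rpow (by linarith) huc hpos)
  have hderiv := intervalIntegral.integral_le_sub_of_hasDeriv_right_of_le hab hflux
    (fun t ht => (hasDerivAt_hardyFlux hp (ha.trans ht.1).ne' (hu t ht)).hasDerivWithinAt)
    ((intervalIntegrable_iff_integrableOn_Icc_of_le hab).1 (hmass.sub henergy))
    (fun t ht => hardy_pointwise_le_deriv_hardyFlux (u t) (u' t) hp (ha.trans ht.1))
  rw [← intervalIntegral.integral_const_mul]
  linarith [intervalIntegral.integral_sub hmass henergy]

theorem hardy_le_energy_add_hardyFlux {η : ℝ} (hp : 1 < p) (hη : 0 < η) (hc : c ≠ 0)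
    (huc : ContinuousOn u (Ioc 0 η)) (hu : ∀ t ∈ Ioo 0 η, HasDerivAt u (u' t) t)
    (henergy : IntervalIntegrable (fun t => ‖u' t‖ ^ p * t ^ (c * p + (p - 1))) volume 0 η)
    (hu0 : c < 0 → Tendsto (fun t => ‖u t‖ ^ p * t ^ (c * p)) (𝓝[>] 0) (𝓝 0)) :
    IntervalIntegrable (fun t => ‖u t‖ ^ p * t ^ (c * p - 1)) volume 0 η ∧
      |c| ^ p * (∫ t in (0 : ℝ)..η, ‖u t‖ ^ p * t ^ (c * p - 1)) ≤
        (∫ t in (0 : ℝ)..η, ‖u' t‖ ^ p * t ^ (c * p + (p - 1))) + hardyFlux p c u η := by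
  have hΛ : 0 < |c| ^ p := by positivity
  set A := ∫ t in (0 : ℝ)..η, ‖u' t‖ ^ p * t ^ (c * p + (p - 1))
  have hsub {δ : ℝ} (hδ : 0 < δ) : Icc δ η ⊆ Ioc 0 η := fun t ht => ⟨hδ.trans_le ht.1, ht.2⟩
  have hbound : ∀ δ ∈ Ioo 0 η, ∫ t in δ..η, ‖u t‖ ^ p * t ^ (c * p - 1) ≤
      (A + (hardyFlux p c u η - min (hardyFlux p c u δ) 0)) / |c| ^ p := by
    intro δ hδ
    rw [le_div_iff₀' hΛ]
    refine (hardy_le_energy_add_hardyFlux_sub hp hδ.1 hδ.2.le (huc.mono (hsub hδ.1))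
      (fun t ht => hu t ⟨hδ.1.trans ht.1, ht.2⟩) (henergy.mono_set ?_)).trans ?_
    · rw [uIcc_of_le hδ.2.le, uIcc_of_le hη.le]
      exact Icc_subset_Icc_left hδ.1.le
    gcongr ?_ + (_ - ?_)
    · refine intervalIntegral.integral_mono_interval hδ.1.le hδ.2.le le_rfl ?_ henergy
      filter_upwards [ae_restrict_mem measurableSet_Ioc] with t ht
      have := ht.1
      positivity
    · exact min_le_left _ _
  have hlim := ((tendsto_min_hardyFlux_zero hu0).const_sub (hardyFlux p c u η)).const_add A
  obtain ⟨hint, hle⟩ := intervalIntegrable_and_integral_le_of_tendsto hη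
    (fun t ht => by have := ht.1; positivity)
    (fun δ hδ => (continuousOn_norm_rpow_mul_rpow (by linarith) (huc.mono (hsub hδ.1))
      fun t ht => hδ.1.trans_le ht.1).intervalIntegrable_of_Icc hδ.2.le)
    hbound (hlim.div_const _)
  rw [sub_zero, le_div_iff₀' hΛ] at hle
  exact ⟨hint, hle⟩

theorem hardy_power_supercritical_general {η α : ℝ} (hp : 1 < p) (hη : 0 < η)
    (hα : α ≠ (p - 1) / p)
    (hu : ∀ t ∈ Ioc 0 η, HasDerivWithinAt u (u' t) (Ioc 0 η) t)
    (henergy : IntervalIntegrable (fun t => ‖u' t‖ ^ p * t ^ (α * p)) volume 0 η)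
    (hu0 : α < (p - 1) / p →
      Tendsto (fun t => ‖u t‖ ^ p * t ^ (α * p - (p - 1))) (𝓝[>] 0) (𝓝 0)) :
    IntervalIntegrable (fun t => ‖u t‖ ^ p * t ^ ((α - 1) * p)) volume 0 η ∧
      |(p - 1) / p - α| ^ p * (∫ t in (0 : ℝ)..η, ‖u t‖ ^ p * t ^ ((α - 1) * p)) ≤
        (∫ t in (0 : ℝ)..η, ‖u' t‖ ^ p * t ^ (α * p))
          + SignType.sign (α - (p - 1) / p) * (|(p - 1) / p - α| ^ p) ^ ((p - 1) / p)
            * η ^ (α * p - (p - 1)) * ‖u η‖ ^ p := by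
  have hp0 : p ≠ 0 := by linarith
  obtain ⟨c, rfl⟩ : ∃ c, α = (p - 1) / p + c := ⟨α - (p - 1) / p, by ring⟩
  have henergy_exp : ((p - 1) / p + c) * p = c * p + (p - 1) := by field_simp; ring
  have hmass_exp : ((p - 1) / p + c - 1) * p = c * p - 1 := by field_simp; ring
  rw [henergy_exp] at henergy
  rw [henergy_exp, add_sub_cancel_right, add_lt_iff_neg_left] at hu0
  have hardy := hardy_le_energy_add_hardyFlux hp hη (by simpa using hα)
    (fun t ht => (hu t ht).continuousWithinAt)
    (fun t ht => (hu t (Ioo_subset_Ioc_self ht)).hasDerivAt (Ioc_mem_nhds ht.1 ht.2)) henergy hu0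
  rw [henergy_exp, hmass_exp, add_sub_cancel_right, add_sub_cancel_left, sub_add_cancel_left,
    abs_neg, ← Real.rpow_mul (abs_nonneg c), mul_div_cancel₀ _ hp0]
  simpa only [hardyFlux, mul_assoc, mul_comm (η ^ (c * p))] using hardy

end HardyInequality

/-- Power-weight Hardy inequality in the supercritical case
`α > 1/p' = (p-1)/p`, with one-sided boundary term. -/
theorem hardy_power_supercritical (p η α : ℝ) (hp : 1 < p) (hη : 0 < η)
    (hα : (p - 1) / p < α)
    (u u' : ℝ → ℝ)
    (hu : ∀ t ∈ Set.Ioc (0:ℝ) η, HasDerivWithinAt u (u' t) (Set.Ioc (0:ℝ) η) t)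
    (hu'c : ContinuousOn u' (Set.Ioc (0:ℝ) η))
    (hsupp : ∃ a, 0 < a ∧ ∀ t ≤ a, u t = 0) :
    (∫ t in (0:ℝ)..η, |u' t| ^ p * t ^ (α * p))
      + (|(p - 1) / p - α| ^ p) ^ ((p - 1) / p) * η ^ (α * p - (p - 1)) * |u η| ^ p
    ≥ |(p - 1) / p - α| ^ p * ∫ t in (0:ℝ)..η, |u t| ^ p * t ^ ((α - 1) * p) := by
  obtain ⟨a, ha, hua⟩ := hsupp
  have hu0 : u =ᶠ[𝓝[>] 0] 0 := eventually_nhdsWithin_of_eventually_nhds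
    ((eventually_le_nhds ha).mono hua)
  have henergy := intervalIntegrable_energy_of_eventuallyEq_zero (r := α * p)
    (zero_lt_one.trans hp) hη hu'c (eventuallyEq_zero_of_hasDerivWithinAt hη hu hu0)
  simpa [hα] using
    (hardy_power_supercritical_general hp hη hα.ne' hu henergy fun h => absurd h hα.not_gt).2
end
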